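/- Let z ∈ (0,1) and let μ be the unique absolutely continuous f_z-invariant Borel probability measure on [0,1]. For every Hölder continuous φ : [0,1] → ℝ and every bounded measurable ψ : [0,1] → ℝ there exists a constant C > 0 such that for all n ≥ 1, |∫ φ·(ψ ∘ f_z^n) dμ − (∫ φ dμ)(∫ ψ dμ)| ≤ C n^{−(1/z − 1)}. -/

import Mathlib

open MeasureTheory Set NNReal

/-- The Liverani–Saussol–Vaienti (Pomeau–Manneville type) map with parameter `z`. -/
noncomputable def lsv (z : ℝ) (y : ℝ) : ℝ :=
  if y < 1 / 2 then y * (1 + 2 ^ z * y ^ z) else 2 * y - 1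

namespace LSV

/-- A global strictly monotone extension of the left branch. -/
noncomputable def G (z y : ℝ) : ℝ := y * (1 + (2 * max y 0) ^ z)

/-- Inverse of the left branch. -/
noncomputable def Phi (z : ℝ) : ℝ → ℝ := Function.invFun (G z)

/-- Left part of the transfer operator. -/
noncomputable def opA (z : ℝ) (f : ℝ → ℝ) (x : ℝ) : ℝ :=
  f (Phi z x) / (1 + (1 + z) * (2 * Phi z x) ^ z)

/-- Right part of the transfer operator. -/
noncomputable def opB (f : ℝ → ℝ) (x : ℝ) : ℝ := f ((1 + x) / 2) / 2

/-- The transfer operator. -/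
noncomputable def opL (z : ℝ) (f : ℝ → ℝ) (x : ℝ) : ℝ := opA z f x + opB f x

/-- Regularity class. -/
def RegOn (r R : ℝ) (f : ℝ → ℝ) (S : Set ℝ) : Prop :=
  ∀ x' ∈ S, ∀ x ∈ S, x' ≤ x →
    f x ≤ f x' * Real.exp (R * (Real.log (x / x')) ^ r) ∧
    f x' ≤ f x * (x / x') ^ 2 * Real.exp (R * (Real.log (x / x')) ^ r)

section basic
variable {z : ℝ}

lemma G_nonneg_eq {y : ℝ} (hy : 0 ≤ y) : G z y = y * (1 + (2 * y) ^ z) := by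
  simp [G, max_eq_left hy]

lemma G_strictMono (hz : 0 < z) : StrictMono (G z) := by
  intro a b hab
  have key : (2 * max a 0) ^ z ≤ (2 * max b 0) ^ z := by
    apply Real.rpow_le_rpow (by positivity) _ hz.le
    gcongr
  have ha : 0 ≤ (2 * max a 0) ^ z := by positivity
  unfold G
  rcases lt_or_ge a 0 with h | h
  · have : (2 * max a 0) ^ z = 0 := by
      rw [max_eq_right h.le]; simp [Real.zero_rpow hz.ne']
    rw [this]
    rcases lt_or_ge b 0 with h' | h'
    · have : (2 * max b 0) ^ z = 0 := by
        rw [max_eq_right h'.le]; simp [Real.zero_rpow hz.ne']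
      rw [this]; linarith
    · have : 0 ≤ b * (1 + (2 * max b 0) ^ z) := by positivity
      linarith
  · nlinarith

lemma G_continuous (hz : 0 < z) : Continuous (G z) := by
  unfold G
  apply continuous_id.mul
  apply continuous_const.add
  apply Continuous.rpow_const (by fun_prop)
  intro x; right; exact hz.le

lemma G_surj (hz : 0 < z) : Function.Surjective (G z) := by
  apply (G_continuous hz).surjective
  · apply Filter.tendsto_atTop_mono' _ _ Filter.tendsto_id
    filter_upwards [Filter.eventually_ge_atTop 0] with y hy
    have : 0 ≤ (2 * max y 0) ^ z := by positivity
    simp only [G, id]; nlinarith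
  · apply Filter.tendsto_atBot_mono' _ _ Filter.tendsto_id
    filter_upwards [Filter.eventually_le_atBot 0] with y hy
    have : 0 ≤ (2 * max y 0) ^ z := by positivity
    simp only [G, id]; nlinarith

lemma G_Phi (hz : 0 < z) (x : ℝ) : G z (Phi z x) = x :=
  Function.invFun_eq (G_surj hz x)

lemma Phi_G (hz : 0 < z) (y : ℝ) : Phi z (G z y) = y :=
  Function.leftInverse_invFun (G_strictMono hz).injective y

lemma Phi_strictMono (hz : 0 < z) : StrictMono (Phi z) := by
  intro a b hab
  by_contra h
  push Not at h
  have := (G_strictMono hz).monotone h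
  rw [G_Phi hz, G_Phi hz] at this
  linarith

lemma Phi_zero (hz : 0 < z) : Phi z 0 = 0 := by
  have := Phi_G hz 0
  simpa [G] using this

lemma G_half : G z (1/2) = 1 := by
  rw [G_nonneg_eq (by norm_num)]
  norm_num

lemma Phi_one (hz : 0 < z) : Phi z 1 = 1/2 := by
  have := Phi_G hz (1/2)
  rwa [G_half] at this

lemma Phi_pos (hz : 0 < z) {x : ℝ} (hx : 0 < x) : 0 < Phi z x := by
  have := Phi_strictMono hz hx
  rwa [Phi_zero hz] at this

lemma Phi_lt (hz : 0 < z) {x : ℝ} (hx : x < 1) : Phi z x < 1/2 := by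
  have := Phi_strictMono hz hx
  rwa [Phi_one hz] at this

lemma Phi_le (hz : 0 < z) {x : ℝ} (hx : x ≤ 1) : Phi z x ≤ 1/2 := by
  have := (Phi_strictMono hz).monotone hx
  rwa [Phi_one hz] at this

lemma Phi_eq (hz : 0 < z) {x : ℝ} (hx : 0 < x) :
    x = Phi z x * (1 + (2 * Phi z x) ^ z) := by
  have := G_Phi hz x
  rw [G_nonneg_eq (Phi_pos hz hx).le] at this
  exact this.symm

lemma Phi_measurable (hz : 0 < z) : Measurable (Phi z) := (Phi_strictMono hz).monotone.measurable

lemma w_bounds (hz : 0 < z) {x : ℝ} (hx : 0 < x) (hx1 : x ≤ 1) :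
    0 < (2 * Phi z x) ^ z ∧ (2 * Phi z x) ^ z ≤ 1 := by
  have h1 := Phi_pos hz hx
  have h2 := Phi_le hz hx1
  exact ⟨by positivity, Real.rpow_le_one (by positivity) (by linarith) hz.le⟩

lemma w_mono (hz : 0 < z) {x' x : ℝ} (hx : 0 < x') (h : x' ≤ x) :
    (2 * Phi z x') ^ z ≤ (2 * Phi z x) ^ z := by
  have h1 := Phi_pos hz hx
  have h2 := (Phi_strictMono hz).monotone h
  apply Real.rpow_le_rpow (by positivity) (by linarith) hz.le

lemma opA_measurable (hz : 0 < z) {f : ℝ → ℝ} (hf : Measurable f) : Measurable (opA z f) := by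
  have := Phi_measurable hz
  unfold opA
  fun_prop

lemma opB_measurable {f : ℝ → ℝ} (hf : Measurable f) : Measurable (opB f) := by
  unfold opB
  fun_prop

lemma opL_measurable (hz : 0 < z) {f : ℝ → ℝ} (hf : Measurable f) : Measurable (opL z f) :=
  (opA_measurable hz hf).add (opB_measurable hf)

lemma RegOn.mono {r R R' : ℝ} {f : ℝ → ℝ} {S S' : Set ℝ} (h : RegOn r R f S) (hR : R ≤ R')
    (hS : S' ⊆ S) (hf : ∀ x ∈ S', 0 ≤ f x) (hpos : ∀ x ∈ S', 0 < x) : RegOn r R' f S' := by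
  intro x' hx' x hx hxx
  obtain ⟨h1, h2⟩ := h x' (hS hx') x (hS hx) hxx
  have a := hf x' hx'
  have b := hf x hx
  have c := hpos x' hx'
  have d := hpos x hx
  have hl : 0 ≤ Real.log (x / x') := Real.log_nonneg (by rw [le_div_iff₀ c]; linarith)
  have e : Real.exp (R * (Real.log (x / x')) ^ r) ≤ Real.exp (R' * (Real.log (x / x')) ^ r) := by
    gcongr
  exact ⟨h1.trans (by gcongr), h2.trans (by gcongr)⟩

lemma RegOn.add {r R : ℝ} {f g : ℝ → ℝ} {S : Set ℝ} (h : RegOn r R f S) (h' : RegOn r R g S) :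
    RegOn r R (fun x => f x + g x) S := by
  intro x' hx' x hx hxx
  obtain ⟨h1, h2⟩ := h x' hx' x hx hxx
  obtain ⟨h3, h4⟩ := h' x' hx' x hx hxx
  constructor
  · rw [add_mul]; linarith
  · rw [add_mul, add_mul]; linarith

lemma RegOn.opA (hz : 0 < z) (hz1 : z < 1) {r R : ℝ} (hr : 0 < r) (hR : 0 ≤ R) {f : ℝ → ℝ}
    (hf : ∀ x ∈ Ioo (0:ℝ) (1/2), 0 ≤ f x)
    (h : RegOn r R f (Ioo 0 (1/2))) : RegOn r R (opA z f) (Ioo 0 1) := by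
  intro x' hx' x hx hxx
  have hy' : Phi z x' ∈ Ioo (0:ℝ) (1/2) := ⟨Phi_pos hz hx'.1, Phi_lt hz hx'.2⟩
  have hy : Phi z x ∈ Ioo (0:ℝ) (1/2) := ⟨Phi_pos hz hx.1, Phi_lt hz hx.2⟩
  have hyy := (Phi_strictMono hz).monotone hxx
  obtain ⟨h1, h2⟩ := h _ hy' _ hy hyy
  have f1 := hf _ hy'
  have f2 := hf _ hy
  have e1 := Phi_eq hz hx'.1
  have e2 := Phi_eq hz hx.1
  have w1 := w_bounds hz hx'.1 hx'.2.le
  have w2 := w_bounds hz hx.1 hx.2.le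
  have ww := w_mono hz hx'.1 hxx
  unfold LSV.opA
  set y' := Phi z x'
  set y := Phi z x
  set w' := (2 * y') ^ z
  set w := (2 * y) ^ z
  have p1 := hy'.1
  have p2 := hy.1
  have p3 := hx'.1
  have p4 := hx.1
  have hxy : x / x' = (y / y') * ((1 + w) / (1 + w')) := by
    rw [e1, e2]; field_simp
  have hq : 1 ≤ (1 + w) / (1 + w') := by
    rw [le_div_iff₀ (by linarith)]; linarith
  have hyge : 1 ≤ y / y' := by rw [le_div_iff₀ p1]; linarith
  have hrat : y / y' ≤ x / x' := by
    rw [hxy]; exact le_mul_of_one_le_right (by positivity) hq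
  have hlog : Real.log (y / y') ≤ Real.log (x / x') := Real.log_le_log (by positivity) hrat
  have hl0 : 0 ≤ Real.log (y / y') := Real.log_nonneg hyge
  have hE : Real.exp (R * (Real.log (y / y')) ^ r) ≤ Real.exp (R * (Real.log (x / x')) ^ r) := by
    have := Real.rpow_le_rpow hl0 hlog hr.le
    gcongr
  set E := Real.exp (R * (Real.log (y / y')) ^ r)
  set E' := Real.exp (R * (Real.log (x / x')) ^ r)
  have E0 : 0 < E := Real.exp_pos _
  have d1 : 0 < 1 + (1 + z) * w' := by nlinarith
  have d2 : 0 < 1 + (1 + z) * w := by nlinarith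
  have d3 : 1 + (1 + z) * w' ≤ 1 + (1 + z) * w := by nlinarith
  constructor
  · rw [div_mul_eq_mul_div]
    apply div_le_div₀ (by positivity) (h1.trans (by gcongr)) d1 d3
  · have key : (y / y') ^ 2 * (1 + (1 + z) * w) ≤ (x / x') ^ 2 * (1 + (1 + z) * w') := by
      rw [hxy, mul_pow, mul_assoc]
      apply mul_le_mul_of_nonneg_left _ (by positivity)
      rw [div_pow, div_mul_eq_mul_div, le_div_iff₀ (by nlinarith)]
      have a1 := w1.1; have a2 := w2.1
      have : 0 ≤ (w - w') * ((1 - z) + (w + w') + (1 + z) * w * w') := by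
        apply mul_nonneg (by linarith)
        have : 0 < (1 + z) * w * w' := by positivity
        linarith
      nlinarith [this]
    calc f y' / (1 + (1 + z) * w') ≤ f y * (y / y') ^ 2 * E / (1 + (1 + z) * w') := by gcongr
      _ ≤ f y / (1 + (1 + z) * w) * (x / x') ^ 2 * E := by
        rw [div_mul_eq_mul_div, div_mul_eq_mul_div, div_le_div_iff₀ d1 d2]
        have : 0 ≤ f y * E := by positivity
        nlinarith [mul_le_mul_of_nonneg_left key this]
      _ ≤ _ := by gcongr

lemma log_half {x' x : ℝ} (hx' : 0 < x') (hx : x ≤ 1) (h : x' ≤ x) :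
    0 ≤ Real.log (((1 + x) / 2) / ((1 + x') / 2)) ∧
    Real.log (((1 + x) / 2) / ((1 + x') / 2)) ≤ (1/2) * Real.log (x / x') := by
  have e : ((1 + x) / 2) / ((1 + x') / 2) = (1 + x) / (1 + x') := by field_simp
  rw [e]
  constructor
  · apply Real.log_nonneg
    rw [le_div_iff₀ (by linarith)]; linarith
  · have hx0 : 0 < x := by linarith
    have : Real.log (x / x') = (2:ℕ) * (1/2 * Real.log (x / x')) := by push_cast; ring
    have h2 : Real.log (((1 + x) / (1 + x')) ^ 2) ≤ Real.log (x / x') := by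
      apply Real.log_le_log (by positivity)
      rw [div_pow, div_le_div_iff₀ (by positivity) hx']
      nlinarith [mul_nonneg (sub_nonneg.2 h) (sub_nonneg.2 (mul_le_one₀ hx hx'.le (h.trans hx)))]
    rw [Real.log_pow] at h2
    push_cast at h2
    linarith

lemma RegOn.opB {r R : ℝ} (hr : 0 < r) (hR : 0 ≤ R) {f : ℝ → ℝ}
    (hf : ∀ x ∈ Ico (1/2:ℝ) 1, 0 ≤ f x)
    (h : RegOn r R f (Ico (1/2) 1)) : RegOn r (R * (1/2) ^ r) (opB f) (Ioo 0 1) := by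
  intro x' hx' x hx hxx
  have hy' : (1 + x') / 2 ∈ Ico (1/2:ℝ) 1 := ⟨by linarith [hx'.1], by linarith [hx'.2]⟩
  have hy : (1 + x) / 2 ∈ Ico (1/2:ℝ) 1 := ⟨by linarith [hx.1], by linarith [hx.2]⟩
  obtain ⟨h1, h2⟩ := h _ hy' _ hy (by linarith)
  obtain ⟨l1, l2⟩ := log_half hx'.1 hx.2.le hxx
  have f1 := hf _ hy'
  have f2 := hf _ hy
  have p1 := hx'.1
  have p2 := hx.1
  have hE : Real.exp (R * (Real.log (((1 + x) / 2) / ((1 + x') / 2))) ^ r) ≤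
      Real.exp (R * (1/2) ^ r * (Real.log (x / x')) ^ r) := by
    rw [mul_assoc, ← Real.mul_rpow (by norm_num)
      (Real.log_nonneg (by rw [le_div_iff₀ p1]; linarith))]
    have := Real.rpow_le_rpow l1 l2 hr.le
    gcongr
  have hrat : ((1 + x) / 2) / ((1 + x') / 2) ≤ x / x' := by
    rw [div_le_div_iff₀ (by positivity) p1]; nlinarith
  unfold LSV.opB
  constructor
  · have : f ((1 + x) / 2) ≤ f ((1 + x') / 2) * Real.exp (R * (1/2) ^ r * (Real.log (x / x')) ^ r) :=
      h1.trans (by gcongr)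
    linarith
  · have : f ((1 + x') / 2) ≤ f ((1 + x) / 2) * (x / x') ^ 2 *
        Real.exp (R * (1/2) ^ r * (Real.log (x / x')) ^ r) :=
      h2.trans (by gcongr)
    linarith

lemma opL_nonneg (hz : 0 < z) {f : ℝ → ℝ} (hf : ∀ x ∈ Ioo (0:ℝ) 1, 0 ≤ f x) :
    ∀ x ∈ Ioo (0:ℝ) 1, 0 ≤ opL z f x := by
  intro x hx
  have h1 := Phi_pos hz hx.1
  have h2 := Phi_lt hz hx.2
  have := hf (Phi z x) ⟨h1, by linarith⟩
  have := hf ((1 + x) / 2) ⟨by linarith [hx.1], by linarith [hx.2]⟩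
  unfold opL opA opB
  positivity

lemma opA_nonneg (hz : 0 < z) {f : ℝ → ℝ} (hf : ∀ x ∈ Ioo (0:ℝ) (1/2), 0 ≤ f x) :
    ∀ x ∈ Ioo (0:ℝ) 1, 0 ≤ opA z f x := by
  intro x hx
  have h1 := Phi_pos hz hx.1
  have h2 := Phi_lt hz hx.2
  have := hf (Phi z x) ⟨h1, by linarith⟩
  unfold opA
  positivity

lemma opL_sub (f g : ℝ → ℝ) : opL z (fun x => f x - g x) = fun x => opL z f x - opL z g x := by
  funext x; simp only [opL, opA, opB]; ring

lemma opL_smul (c : ℝ) (f : ℝ → ℝ) : opL z (fun x => c * f x) = fun x => c * opL z f x := by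
  funext x; simp only [opL, opA, opB]; ring

lemma iter_sub (n : ℕ) (f g : ℝ → ℝ) :
    (opL z)^[n] (fun x => f x - g x) = fun x => (opL z)^[n] f x - (opL z)^[n] g x := by
  induction n generalizing f g with
  | zero => rfl
  | succ n ih => simp only [Function.iterate_succ, Function.comp, opL_sub, ih]

lemma iter_smul (n : ℕ) (c : ℝ) (f : ℝ → ℝ) :
    (opL z)^[n] (fun x => c * f x) = fun x => c * (opL z)^[n] f x := by
  induction n generalizing f with
  | zero => rfl
  | succ n ih => simp only [Function.iterate_succ, Function.comp, opL_smul, ih]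

lemma iter_nonneg (hz : 0 < z) (n : ℕ) {f : ℝ → ℝ} (hf : ∀ x ∈ Ioo (0:ℝ) 1, 0 ≤ f x) :
    ∀ x ∈ Ioo (0:ℝ) 1, 0 ≤ (opL z)^[n] f x := by
  induction n generalizing f with
  | zero => exact hf
  | succ n ih =>
    rw [Function.iterate_succ]
    exact ih (opL_nonneg hz hf)

lemma iter_mono (hz : 0 < z) (n : ℕ) {f g : ℝ → ℝ} (hf : ∀ x ∈ Ioo (0:ℝ) 1, f x ≤ g x) :
    ∀ x ∈ Ioo (0:ℝ) 1, (opL z)^[n] f x ≤ (opL z)^[n] g x := by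
  intro x hx
  have := iter_nonneg hz n (f := fun x => g x - f x) (fun x hx => by linarith [hf x hx]) x hx
  rw [iter_sub] at this
  linarith

lemma iter_measurable (hz : 0 < z) (n : ℕ) {f : ℝ → ℝ} (hf : Measurable f) :
    Measurable ((opL z)^[n] f) := by
  induction n generalizing f with
  | zero => exact hf
  | succ n ih => exact ih (opL_measurable hz hf)

end basic

section meas
variable {z : ℝ}

/-- Lebesgue measure on the open unit interval. -/
noncomputable abbrev nu : Measure ℝ := volume.restrict (Ioo (0:ℝ) 1)

lemma G_image (hz : 0 < z) (a : ℝ) : G z '' Ioo 0 a = Ioo 0 (G z a) := by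
  ext x
  constructor
  · rintro ⟨y, hy, rfl⟩
    have h0 : G z 0 = 0 := by simp [G]
    exact ⟨by have := G_strictMono hz hy.1; rwa [h0] at this, G_strictMono hz hy.2⟩
  · intro hx
    refine ⟨Phi z x, ⟨Phi_pos hz hx.1, ?_⟩, G_Phi hz x⟩
    have := Phi_strictMono hz hx.2
    rwa [Phi_G hz] at this

lemma G_deriv {y : ℝ} (hy : 0 < y) :
    HasDerivAt (G z) (1 + (1 + z) * (2 * y) ^ z) y := by
  have h1 : HasDerivAt (fun y : ℝ => y * (1 + (2 * y) ^ z))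
      (1 * (1 + (2 * y) ^ z) + y * (2 * z * (2 * y) ^ (z - 1))) y := by
    apply (hasDerivAt_id y).mul
    have h2 : HasDerivAt (fun y : ℝ => 2 * y) 2 y := by
      simpa using (hasDerivAt_id y).const_mul 2
    exact (h2.rpow_const (Or.inl (by positivity))).const_add 1
  have h3 : (1 * (1 + (2 * y) ^ z) + y * (2 * z * (2 * y) ^ (z - 1))) =
      1 + (1 + z) * (2 * y) ^ z := by
    rw [Real.rpow_sub_one (by positivity)]
    field_simp
    ring
  rw [h3] at h1
  apply h1.congr_of_eventuallyEq
  filter_upwards [lt_mem_nhds hy] with t ht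
  exact G_nonneg_eq (le_of_lt ht)

lemma opA_core (hz : 0 < z) (f ψ : ℝ → ℝ) (y : ℝ) (hy : 0 < y) :
    |1 + (1 + z) * (2 * y) ^ z| • (opA z f (G z y) * ψ (G z y)) = f y * ψ (G z y) := by
  have : 0 < 1 + (1 + z) * (2 * y) ^ z := by positivity
  rw [abs_of_pos this, opA, Phi_G hz, smul_eq_mul]
  field_simp

lemma opA_integral (hz : 0 < z) (f ψ : ℝ → ℝ) (a : ℝ) :
    ∫ x in Ioo 0 (G z a), opA z f x * ψ x = ∫ y in Ioo 0 a, f y * ψ (G z y) := by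
  rw [← G_image hz, integral_image_eq_integral_abs_deriv_smul measurableSet_Ioo
    (fun y hy => (G_deriv (z := z) hy.1).hasDerivWithinAt) ((G_strictMono hz).injective.injOn)]
  apply setIntegral_congr_fun measurableSet_Ioo
  intro y hy
  exact opA_core hz f ψ y hy.1

lemma opA_integrable (hz : 0 < z) (f ψ : ℝ → ℝ) (a : ℝ) :
    IntegrableOn (fun x => opA z f x * ψ x) (Ioo 0 (G z a)) ↔
      IntegrableOn (fun y => f y * ψ (G z y)) (Ioo 0 a) := by
  rw [← G_image hz, integrableOn_image_iff_integrableOn_abs_deriv_smul measurableSet_Ioo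
    (fun y hy => (G_deriv (z := z) hy.1).hasDerivWithinAt) ((G_strictMono hz).injective.injOn)]
  apply integrableOn_congr_fun _ measurableSet_Ioo
  intro y hy
  exact opA_core hz f ψ y hy.1

lemma rb_image : (fun y : ℝ => 2 * y - 1) '' Ioo (1/2) 1 = Ioo 0 1 := by
  ext x
  constructor
  · rintro ⟨y, hy, rfl⟩
    exact ⟨by linarith [hy.1], by linarith [hy.2]⟩
  · intro hx
    exact ⟨(1 + x) / 2, ⟨by linarith [hx.1], by linarith [hx.2]⟩, by ring⟩

lemma rb_deriv (y : ℝ) : HasDerivAt (fun y : ℝ => 2 * y - 1) 2 y := by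
  simpa using ((hasDerivAt_id y).const_mul 2).sub_const 1

lemma rb_inj : Function.Injective (fun y : ℝ => 2 * y - 1) := by
  intro a b h
  simp only at h
  linarith

lemma opB_core (f ψ : ℝ → ℝ) (y : ℝ) :
    |(2:ℝ)| • (opB f (2 * y - 1) * ψ (2 * y - 1)) = f y * ψ (2 * y - 1) := by
  rw [opB, show (1 + (2 * y - 1)) / 2 = y by ring, abs_of_pos (by norm_num), smul_eq_mul]
  ring

lemma opB_integral (f ψ : ℝ → ℝ) :
    ∫ x in Ioo 0 1, opB f x * ψ x = ∫ y in Ioo (1/2) 1, f y * ψ (2 * y - 1) := by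
  rw [← rb_image, integral_image_eq_integral_abs_deriv_smul measurableSet_Ioo
    (fun y _ => (rb_deriv y).hasDerivWithinAt) rb_inj.injOn]
  apply setIntegral_congr_fun measurableSet_Ioo
  intro y _
  exact opB_core f ψ y

lemma opB_integrable (f ψ : ℝ → ℝ) :
    IntegrableOn (fun x => opB f x * ψ x) (Ioo 0 1) ↔
      IntegrableOn (fun y => f y * ψ (2 * y - 1)) (Ioo (1/2) 1) := by
  rw [← rb_image, integrableOn_image_iff_integrableOn_abs_deriv_smul measurableSet_Ioo
    (fun y _ => (rb_deriv y).hasDerivWithinAt) rb_inj.injOn]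
  apply integrableOn_congr_fun _ measurableSet_Ioo
  intro y _
  exact opB_core f ψ y

lemma lsv_left {y : ℝ} (hy : y ∈ Ioo (0:ℝ) (1/2)) : lsv z y = G z y := by
  rw [lsv, if_pos hy.2, G_nonneg_eq hy.1.le, Real.mul_rpow (by norm_num) hy.1.le]

lemma lsv_right {y : ℝ} (hy : y ∈ Ioo (1/2:ℝ) 1) : lsv z y = 2 * y - 1 := by
  rw [lsv, if_neg (not_lt.2 hy.1.le)]

lemma lsv_measurable : Measurable (lsv z) := by
  unfold lsv
  apply Measurable.ite measurableSet_Iio <;> fun_prop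

lemma split_integrable {F : ℝ → ℝ} (h1 : IntegrableOn F (Ioo 0 (1/2)))
    (h2 : IntegrableOn F (Ioo (1/2) 1)) : IntegrableOn F (Ioo 0 1) := by
  have h2' : IntegrableOn F (Ico (1/2) 1) := by rwa [integrableOn_Ico_iff_integrableOn_Ioo]
  have := h1.union h2'
  rwa [Ioo_union_Ico_eq_Ioo (by norm_num) (by norm_num)] at this

lemma split_integral {F : ℝ → ℝ} (h : IntegrableOn F (Ioo 0 1)) :
    ∫ x in Ioo 0 1, F x = (∫ x in Ioo 0 (1/2), F x) + ∫ x in Ioo (1/2) 1, F x := by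
  rw [← integral_Ico_eq_integral_Ioo (x := (1/2:ℝ)), ← setIntegral_union _ measurableSet_Ico
    (h.mono_set (Ioo_subset_Ioo_right (by norm_num)))
    (h.mono_set (fun x hx => ⟨by linarith [hx.1], hx.2⟩)),
    Ioo_union_Ico_eq_Ioo (by norm_num) (by norm_num)]
  rw [Set.disjoint_left]
  intro x hx hx'
  linarith [hx.2, hx'.1]

lemma opA_integrable_one (hz : 0 < z) {f : ℝ → ℝ} (hf : IntegrableOn f (Ioo 0 1)) :
    IntegrableOn (opA z f) (Ioo 0 1) := by
  have h := (opA_integrable hz f (fun _ => 1) (1/2)).2 (by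
    simpa using hf.mono_set (Ioo_subset_Ioo_right (by norm_num)))
  rw [G_half] at h
  simpa using h

lemma opB_integrable_one {f : ℝ → ℝ} (hf : IntegrableOn f (Ioo 0 1)) :
    IntegrableOn (opB f) (Ioo 0 1) := by
  have h := (opB_integrable f (fun _ => 1)).2 (by
    simpa using hf.mono_set (Ioo_subset_Ioo_left (by norm_num)))
  simpa using h

lemma opL_integrable (hz : 0 < z) {f : ℝ → ℝ} (hf : IntegrableOn f (Ioo 0 1)) :
    IntegrableOn (opL z f) (Ioo 0 1) :=
  (opA_integrable_one hz hf).add (opB_integrable_one hf)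

lemma bdd_mul_integrable {f ψ : ℝ → ℝ} {M : ℝ} {S : Set ℝ} (hf : IntegrableOn f S) (hψ : Measurable ψ)
    (hM : ∀ x, |ψ x| ≤ M) : IntegrableOn (fun x => f x * ψ x) S :=
  Integrable.mul_bdd (c := M) hf hψ.aestronglyMeasurable (Filter.Eventually.of_forall hM)

lemma duality (hz : 0 < z) {f ψ : ℝ → ℝ} {M : ℝ} (hf : IntegrableOn f (Ioo 0 1))
    (hψ : Measurable ψ) (hM : ∀ x, |ψ x| ≤ M) :
    ∫ x in Ioo 0 1, opL z f x * ψ x = ∫ x in Ioo 0 1, f x * ψ (lsv z x) := by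
  have h1 : ∫ x in Ioo 0 1, opL z f x * ψ x =
      (∫ x in Ioo 0 1, opA z f x * ψ x) + ∫ x in Ioo 0 1, opB f x * ψ x := by
    rw [← integral_add (bdd_mul_integrable (opA_integrable_one hz hf) hψ hM)
      (bdd_mul_integrable (opB_integrable_one hf) hψ hM)]
    congr 1
    funext x
    simp only [opL]; ring
  have h2 := opA_integral hz f ψ (1/2)
  rw [G_half] at h2
  rw [h1, h2, opB_integral, split_integral (F := fun x => f x * ψ (lsv z x))
    (bdd_mul_integrable hf (hψ.comp lsv_measurable) (fun x => hM _))]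
  congr 1
  · exact setIntegral_congr_fun measurableSet_Ioo (fun y hy => by simp only [lsv_left hy])
  · exact setIntegral_congr_fun measurableSet_Ioo (fun y hy => by simp only [lsv_right hy])

lemma iter_integrable (hz : 0 < z) (n : ℕ) {f : ℝ → ℝ} (hf : IntegrableOn f (Ioo 0 1)) :
    IntegrableOn ((opL z)^[n] f) (Ioo 0 1) := by
  induction n generalizing f with
  | zero => exact hf
  | succ n ih => exact ih (opL_integrable hz hf)

lemma iter_duality (hz : 0 < z) (n : ℕ) {f ψ : ℝ → ℝ} {M : ℝ} (hf : IntegrableOn f (Ioo 0 1))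
    (hψ : Measurable ψ) (hM : ∀ x, |ψ x| ≤ M) :
    ∫ x in Ioo 0 1, (opL z)^[n] f x * ψ x = ∫ x in Ioo 0 1, f x * ψ ((lsv z)^[n] x) := by
  induction n generalizing f with
  | zero => rfl
  | succ n ih =>
    rw [Function.iterate_succ, Function.comp, ih (opL_integrable hz hf),
      duality hz hf (ψ := fun x => ψ ((lsv z)^[n] x)) (hψ.comp (lsv_measurable.iterate n))
        (fun x => hM _)]
    rfl

lemma iter_mass (hz : 0 < z) (n : ℕ) {f : ℝ → ℝ} (hf : IntegrableOn f (Ioo 0 1)) :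
    ∫ x in Ioo 0 1, (opL z)^[n] f x = ∫ x in Ioo 0 1, f x := by
  have := iter_duality hz n hf (ψ := fun _ => 1) (M := 1) measurable_const (by simp)
  simpa using this

lemma opA_mass (hz : 0 < z) (f : ℝ → ℝ) (a : ℝ) :
    ∫ x in Ioo 0 a, opA z f x = ∫ y in Ioo 0 (Phi z a), f y := by
  have := opA_integral hz f (fun _ => 1) (Phi z a)
  rw [G_Phi hz] at this
  simpa using this

end meas

section hn
variable {z : ℝ}

/-- Iterates of the constant density. -/
noncomputable def h (z : ℝ) (n : ℕ) : ℝ → ℝ := (opL z)^[n] (fun _ => 1)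

lemma h_succ (n : ℕ) : h z (n + 1) = opL z (h z n) := Function.iterate_succ_apply' _ _ _

lemma h_add (n k : ℕ) : (opL z)^[n] (h z k) = h z (k + n) := by
  rw [h, h, add_comm, Function.iterate_add_apply]

lemma h_meas (hz : 0 < z) (n : ℕ) : Measurable (h z n) := iter_measurable hz n measurable_const

lemma h_nonneg (hz : 0 < z) (n : ℕ) : ∀ x ∈ Ioo (0:ℝ) 1, 0 ≤ h z n x :=
  iter_nonneg hz n (fun _ _ => zero_le_one)

lemma one_int : IntegrableOn (fun _ : ℝ => (1:ℝ)) (Ioo 0 1) := by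
  apply integrableOn_const <;> simp

lemma h_int (hz : 0 < z) (n : ℕ) : IntegrableOn (h z n) (Ioo 0 1) := iter_integrable hz n one_int

lemma h_mass (hz : 0 < z) (n : ℕ) : ∫ x in Ioo 0 1, h z n x = 1 := by
  rw [h, iter_mass hz n one_int]
  simp

/-- invariance of the regularity class -/
lemma RegOn.opL (hz : 0 < z) (hz1 : z < 1) {r R : ℝ} (hr : 0 < r) (hR : 0 ≤ R) {f : ℝ → ℝ}
    (hf : ∀ x ∈ Ioo (0:ℝ) 1, 0 ≤ f x)
    (h1 : RegOn r (R * (1/2) ^ r) f (Ioo 0 (1/2))) (h2 : RegOn r R f (Ico (1/2) 1)) :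
    RegOn r (R * (1/2) ^ r) (opL z f) (Ioo 0 1) := by
  apply RegOn.add
  · exact RegOn.opA hz hz1 hr (by positivity) (fun x hx => hf x ⟨hx.1, by linarith [hx.2]⟩) h1
  · exact RegOn.opB hr hR (fun x hx => hf x ⟨by linarith [hx.1], hx.2⟩) h2

lemma h_reg (hz : 0 < z) (hz1 : z < 1) {r : ℝ} (hr : 0 < r) (n : ℕ) :
    RegOn r 0 (h z n) (Ioo 0 1) := by
  induction n with
  | zero =>
    intro x' hx' x hx hxx
    have p1 := hx'.1
    have : 1 ≤ x / x' := by rw [le_div_iff₀ p1]; linarith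
    simp only [h, Function.iterate_zero, id, zero_mul, Real.exp_zero]
    constructor
    · norm_num
    · nlinarith
  | succ n ih =>
    rw [h_succ]
    have hn := h_nonneg hz n
    have := RegOn.opL hz hz1 hr le_rfl hn
      (ih.mono (by simp) (Ioo_subset_Ioo_right (by norm_num))
        (fun x hx => hn x ⟨hx.1, by linarith [hx.2]⟩) (fun x hx => hx.1))
      (ih.mono le_rfl (fun x hx => ⟨by linarith [hx.1], hx.2⟩)
        (fun x hx => hn x ⟨by linarith [hx.1], hx.2⟩) (fun x hx => by linarith [hx.1]))
    simpa using this

lemma h_anti (hz : 0 < z) (hz1 : z < 1) (n : ℕ) {x' x : ℝ} (hx' : 0 < x') (hxx : x' ≤ x)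
    (hx : x < 1) : h z n x ≤ h z n x' := by
  have := (h_reg hz hz1 one_pos n x' ⟨hx', by linarith⟩ x ⟨by linarith, hx⟩ hxx).1
  simpa using this

lemma h_sq (hz : 0 < z) (hz1 : z < 1) (n : ℕ) {x' x : ℝ} (hx' : 0 < x') (hxx : x' ≤ x)
    (hx : x < 1) : h z n x' ≤ h z n x * (x / x') ^ 2 := by
  have := (h_reg hz hz1 one_pos n x' ⟨hx', by linarith⟩ x ⟨by linarith, hx⟩ hxx).2
  simpa using this

lemma h_le_two (hz : 0 < z) (hz1 : z < 1) (n : ℕ) {x : ℝ} (hx : 1/2 ≤ x) (hx1 : x < 1) :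
    h z n x ≤ 2 := by
  have h1 : ∫ t in Ioo 0 x, h z n x ≤ ∫ t in Ioo 0 x, h z n t := by
    apply setIntegral_mono_on (by apply integrableOn_const <;> simp)
      ((h_int hz n).mono_set (Ioo_subset_Ioo_right hx1.le)) measurableSet_Ioo
    intro t ht
    exact h_anti hz hz1 n ht.1 ht.2.le hx1
  have h2 : ∫ t in Ioo 0 x, h z n t ≤ 1 := by
    rw [← h_mass hz n]
    apply setIntegral_mono_set (h_int hz n)
    · exact (ae_restrict_iff' measurableSet_Ioo).2 (Filter.Eventually.of_forall (h_nonneg hz n))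
    · exact (Ioo_subset_Ioo_right hx1.le).eventuallyLE
  have h3 : ∫ t in Ioo 0 x, h z n x = x * h z n x := by
    simp [show 0 ≤ x by linarith]
  have := h_nonneg hz n x ⟨by linarith, hx1⟩
  nlinarith

lemma w_eq {y : ℝ} (hy : 0 < y) : (2 * y) ^ z = 2 ^ z * y ^ z :=
  Real.mul_rpow (by norm_num) hy.le

lemma two_rpow_ge (hz : 0 < z) : (1:ℝ) ≤ 2 ^ z := Real.one_le_rpow (by norm_num) hz.le

lemma h_env (hz : 0 < z) (hz1 : z < 1) (n : ℕ) : ∀ x ∈ Ioo (0:ℝ) 1, h z n x ≤ 6 * x ^ (-z) := by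
  induction n with
  | zero =>
    intro x hx
    have : 1 ≤ x ^ (-z) := Real.one_le_rpow_of_pos_of_le_one_of_nonpos hx.1 hx.2.le (by linarith)
    simp only [h, Function.iterate_zero, id]
    linarith
  | succ n ih =>
    intro x hx
    rw [h_succ]
    have hy := Phi_pos hz hx.1
    have hy2 := Phi_lt hz hx.2
    have e := Phi_eq hz hx.1
    have hw := w_bounds hz hx.1 hx.2.le
    have a1 := ih (Phi z x) ⟨hy, by linarith⟩
    have a2 := h_le_two hz hz1 n (x := (1 + x) / 2) (by linarith [hx.1]) (by linarith [hx.2])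
    have we := w_eq (z := z) hy
    unfold opL opA opB
    set y := Phi z x
    set w := (2 * y) ^ z
    have hb : 0 < y ^ z := by positivity
    have hxz : x ^ z ≤ y ^ z * (1 + z * w) := by
      conv_lhs => rw [e]
      rw [Real.mul_rpow hy.le (by linarith)]
      gcongr
      exact rpow_one_add_le_one_add_mul_self (by linarith) hz.le hz1.le
    have hx0 : 0 < x ^ z := Real.rpow_pos_of_pos hx.1 z
    rw [Real.rpow_neg hy.le] at a1
    rw [Real.rpow_neg hx.1.le]
    have t2 := two_rpow_ge hz
    set b := y ^ z
    have hbw : b ≤ w := by rw [we]; nlinarith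
    have w0 := hw.1
    have d0 : 0 < 1 + z * w := by positivity
    have d1 : 0 < 1 + (1 + z) * w := by positivity
    calc h z n y / (1 + (1 + z) * w) + h z n ((1 + x) / 2) / 2
        ≤ 6 * b⁻¹ / (1 + (1 + z) * w) + 1 := by gcongr; linarith
      _ ≤ 6 * (b * (1 + z * w))⁻¹ := by
        have : 6 * (b * (1 + z * w))⁻¹ - 6 * b⁻¹ / (1 + (1 + z) * w) - 1 =
          (6 * w - b * ((1 + z * w) * (1 + (1 + z) * w))) /
            (b * (1 + z * w) * (1 + (1 + z) * w)) := by
          field_simp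
          ring
        have h2 : 0 ≤ (6 * w - b * ((1 + z * w) * (1 + (1 + z) * w))) /
            (b * (1 + z * w) * (1 + (1 + z) * w)) := by
          apply div_nonneg _ (by positivity)
          have c1 : 1 + z * w ≤ 2 := by nlinarith [hw.2]
          have c2 : 1 + (1 + z) * w ≤ 3 := by nlinarith [hw.2]
          have c3 : (1 + z * w) * (1 + (1 + z) * w) ≤ 2 * 3 := by gcongr
          nlinarith
        linarith
      _ ≤ 6 * (x ^ z)⁻¹ := by gcongr

lemma rpow_int (hz1 : z < 1) {a : ℝ} (ha : 0 < a) :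
    IntegrableOn (fun x : ℝ => x ^ (-z)) (Ioo 0 a) := by
  have := intervalIntegral.intervalIntegrable_rpow' (a := 0) (b := a) (r := -z) (by linarith)
  rw [intervalIntegrable_iff_integrableOn_Ioo_of_le ha.le] at this
  exact this

lemma env_mass (hz1 : z < 1) {f : ℝ → ℝ} {E a : ℝ} (hf : IntegrableOn f (Ioo 0 1))
    (ha : 0 < a) (ha1 : a ≤ 1) (hE : ∀ x ∈ Ioo (0:ℝ) 1, f x ≤ E * x ^ (-z)) :
    ∫ x in Ioo 0 a, f x ≤ E * (a ^ (1 - z) / (1 - z)) := by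
  have h1 : ∫ x in Ioo 0 a, f x ≤ ∫ x in Ioo 0 a, E * x ^ (-z) := by
    apply setIntegral_mono_on (hf.mono_set (Ioo_subset_Ioo_right ha1))
      ((rpow_int hz1 ha).const_mul E) measurableSet_Ioo
    intro x hx
    exact hE x ⟨hx.1, by linarith [hx.2]⟩
  have h2 : ∫ x in Ioo 0 a, x ^ (-z) = a ^ (1 - z) / (1 - z) := by
    rw [← integral_Ioc_eq_integral_Ioo, ← intervalIntegral.integral_of_le ha.le,
      integral_rpow (Or.inl (by linarith))]
    rw [Real.zero_rpow (by linarith)]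
    rw [show -z + 1 = 1 - z by ring]; simp
  rw [integral_const_mul, h2] at h1
  exact h1

lemma h_lower (hz : 0 < z) (hz1 : z < 1) :
    ∃ u : ℝ, 0 < u ∧ u ≤ 1 ∧ ∀ n, ∀ x ∈ Ioo (0:ℝ) 1, u ≤ h z n x := by
  have hz' : 0 < 1 - z := by linarith
  set d : ℝ := ((1 - z) / 12) ^ (1 / (1 - z)) with hd
  have d0 : 0 < d := by positivity
  have d1 : d < 1 := Real.rpow_lt_one (by positivity) (by linarith) (by positivity)
  have dpow : d ^ (1 - z) = (1 - z) / 12 := by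
    rw [hd, ← Real.rpow_mul (by positivity), one_div_mul_cancel hz'.ne', Real.rpow_one]
  refine ⟨d ^ 2 / 2, by positivity, by nlinarith, ?_⟩
  intro n
  have key : 1/2 ≤ h z n d := by
    have m1 := env_mass hz1 (h_int hz n) d0 d1.le (h_env hz hz1 n)
    rw [dpow] at m1
    have : 6 * ((1 - z) / 12 / (1 - z)) = 1/2 := by field_simp; norm_num
    rw [this] at m1
    have m2 := h_mass hz n
    rw [← Ioo_union_Ico_eq_Ioo d0 d1.le, setIntegral_union (by
        rw [Set.disjoint_left]; intro x hx hx'; linarith [hx.2, hx'.1]) measurableSet_Ico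
        ((h_int hz n).mono_set (Ioo_subset_Ioo_right d1.le))
        ((h_int hz n).mono_set (fun x hx => ⟨by linarith [hx.1], hx.2⟩))] at m2
    have m3 : ∫ x in Ico d 1, h z n x ≤ ∫ x in Ico d 1, h z n d := by
      apply setIntegral_mono_on ((h_int hz n).mono_set (fun x hx => ⟨by linarith [hx.1], hx.2⟩))
        (by apply integrableOn_const <;> simp) measurableSet_Ico
      intro x hx
      exact h_anti hz hz1 n d0 hx.1 hx.2
    have m4 : ∫ x in Ico d 1, h z n d = (1 - d) * h z n d := by
      simp [d1.le]
    have := h_nonneg hz n d ⟨d0, d1⟩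
    nlinarith
  intro x hx
  rcases le_total x d with hxd | hxd
  · have := h_anti hz hz1 n hx.1 hxd d1
    nlinarith
  · have h1 := h_sq hz hz1 n d0 hxd hx.2
    have h0 := h_nonneg hz n x hx
    have h2 : (x / d) ^ 2 ≤ 1 / d ^ 2 := by
      rw [div_pow]
      have := hx.1; have := hx.2
      gcongr
      nlinarith
    have h3 : 1/2 ≤ h z n x * (1 / d ^ 2) := by
      calc 1/2 ≤ _ := key.trans h1
        _ ≤ _ := by gcongr
    rw [mul_one_div, le_div_iff₀ (by positivity)] at h3
    linarith

/-- Preimages of `1` along the left branch. -/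
noncomputable def X (z : ℝ) (n : ℕ) : ℝ := (Phi z)^[n] 1

lemma X_succ (n : ℕ) : X z (n + 1) = Phi z (X z n) := Function.iterate_succ_apply' _ _ _

lemma X_mem (hz : 0 < z) (n : ℕ) : 0 < X z n ∧ X z n ≤ 1 := by
  induction n with
  | zero => simp [X]
  | succ n ih =>
    rw [X_succ]
    exact ⟨Phi_pos hz ih.1, by linarith [Phi_le hz ih.2]⟩

lemma X_bound (hz : 0 < z) (hz1 : z < 1) (n : ℕ) : z / 3 * n ≤ ((X z n) ^ z)⁻¹ := by
  induction n with
  | zero => simp [X]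
  | succ n ih =>
    rw [X_succ]
    obtain ⟨x0, x1⟩ := X_mem hz n
    set x := X z n
    have hy := Phi_pos hz x0
    have hy2 := Phi_le hz x1
    have e := Phi_eq hz x0
    have hw := w_bounds hz x0 x1
    have we := w_eq (z := z) hy
    set y := Phi z x
    set w := (2 * y) ^ z
    have w0 := hw.1
    have w1 := hw.2
    have hb : 0 < y ^ z := by positivity
    have hlog : w / 2 ≤ Real.log (1 + w) := by
      have := Real.le_log_one_add_of_nonneg w0.le
      have h2 : w / 2 ≤ 2 * w / (w + 2) := by
        rw [div_le_div_iff₀ (by norm_num) (by positivity)]; nlinarith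
      linarith
    have hpow : 1 + z * w / 2 ≤ (1 + w) ^ z := by
      rw [Real.rpow_def_of_pos (by linarith)]
      have := Real.add_one_le_exp (Real.log (1 + w) * z)
      nlinarith
    have hxz : y ^ z * (1 + z * w / 2) ≤ x ^ z := by
      conv_rhs => rw [e]
      rw [Real.mul_rpow hy.le (by linarith)]
      gcongr
    have t2 := two_rpow_ge hz
    set b := y ^ z
    have hbw : b ≤ w := by rw [we]; nlinarith
    have h1 : (x ^ z)⁻¹ ≤ (b * (1 + z * w / 2))⁻¹ := by gcongr
    have h2 : (b * (1 + z * w / 2))⁻¹ + z / 3 ≤ b⁻¹ := by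
      have : b⁻¹ - (b * (1 + z * w / 2))⁻¹ - z / 3 =
        (3 * z * w - 2 * z * b * (1 + z * w / 2)) / (6 * b * (1 + z * w / 2)) := by
        field_simp
        ring
      have h3 : 0 ≤ (3 * z * w - 2 * z * b * (1 + z * w / 2)) / (6 * b * (1 + z * w / 2)) := by
        apply div_nonneg _ (by positivity)
        have : z * w / 2 ≤ 1/2 := by nlinarith
        have : b * (1 + z * w / 2) ≤ w * (3/2) := by gcongr; linarith
        nlinarith
      linarith
    push_cast
    linarith

end hn

section coupling
variable {z : ℝ}

/-- The class of densities used in the coupling. -/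
structure Good (r R : ℝ) (f : ℝ → ℝ) : Prop where
  meas : Measurable f
  int : IntegrableOn f (Ioo 0 1)
  nn : ∀ x ∈ Ioo (0:ℝ) 1, 0 ≤ f x
  left : RegOn r (R * (1/2) ^ r) f (Ioo 0 (1/2))
  right : RegOn r R f (Ico (1/2) 1)

lemma half_rpow_lt {r : ℝ} (hr : 0 < r) : ((1:ℝ)/2) ^ r < 1 :=
  Real.rpow_lt_one (by norm_num) (by norm_num) hr

lemma R1_le {r R : ℝ} (hr : 0 < r) (hR : 0 ≤ R) : R * (1/2:ℝ) ^ r ≤ R :=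
  mul_le_of_le_one_right hR (half_rpow_lt hr).le

lemma Good.of_reg {r R : ℝ} (hr : 0 < r) (hR : 0 ≤ R) {f : ℝ → ℝ} (hm : Measurable f)
    (hi : IntegrableOn f (Ioo 0 1)) (hn : ∀ x ∈ Ioo (0:ℝ) 1, 0 ≤ f x)
    (h : RegOn r (R * (1/2) ^ r) f (Ioo 0 1)) : Good r R f where
  meas := hm
  int := hi
  nn := hn
  left := h.mono le_rfl (Ioo_subset_Ioo_right (by norm_num))
        (fun x hx => hn x ⟨hx.1, by linarith [hx.2]⟩) (fun x hx => hx.1)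
  right := h.mono (R1_le hr hR) (fun x hx => ⟨by linarith [hx.1], hx.2⟩)
        (fun x hx => hn x ⟨by linarith [hx.1], hx.2⟩) (fun x hx => by linarith [hx.1])

lemma Good.opA (hz : 0 < z) (hz1 : z < 1) {r R : ℝ} (hr : 0 < r) (hR : 0 ≤ R) {f : ℝ → ℝ}
    (h : Good r R f) : Good r R (opA z f) := by
  have hn : ∀ x ∈ Ioo (0:ℝ) (1/2), 0 ≤ f x := fun x hx => h.nn x ⟨hx.1, by linarith [hx.2]⟩
  exact Good.of_reg hr hR (opA_measurable hz h.meas) (opA_integrable_one hz h.int)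
    (opA_nonneg hz hn) (RegOn.opA hz hz1 hr (by positivity) hn h.left)

lemma Good.regL (hz : 0 < z) (hz1 : z < 1) {r R : ℝ} (hr : 0 < r) (hR : 0 ≤ R) {f : ℝ → ℝ}
    (h : Good r R f) : RegOn r (R * (1/2) ^ r) (opL z f) (Ioo 0 1) :=
  RegOn.opL hz hz1 hr hR h.nn h.left h.right

lemma Good.opL (hz : 0 < z) (hz1 : z < 1) {r R : ℝ} (hr : 0 < r) (hR : 0 ≤ R) {f : ℝ → ℝ}
    (h : Good r R f) : Good r R (opL z f) :=
  Good.of_reg hr hR (opL_measurable hz h.meas) (opL_integrable hz h.int)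
    (opL_nonneg hz h.nn) (h.regL hz hz1 hr hR)

lemma Good.iter (hz : 0 < z) (hz1 : z < 1) {r R : ℝ} (hr : 0 < r) (hR : 0 ≤ R) (n : ℕ) {f : ℝ → ℝ}
    (h : Good r R f) : Good r R ((LSV.opL z)^[n] f) := by
  induction n with
  | zero => exact h
  | succ n ih =>
    rw [Function.iterate_succ_apply']
    exact ih.opL hz hz1 hr hR

lemma log_Y {x' x : ℝ} (hx' : 1/2 ≤ x') (hx : x < 1) (hxx : x' ≤ x) :
    0 ≤ Real.log (x / x') ∧ Real.log (x / x') ≤ 1 ∧ x / x' ≤ 2 := by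
  have h1 : 1 ≤ x / x' := by rw [le_div_iff₀ (by linarith)]; linarith
  have h2 : x / x' ≤ 2 := by rw [div_le_iff₀ (by linarith)]; linarith
  refine ⟨Real.log_nonneg h1, ?_, h2⟩
  have := Real.log_le_sub_one_of_pos (show 0 < x / x' by linarith)
  linarith

lemma Y_pair {r R : ℝ} (hr : 0 < r) (hR : 0 ≤ R) {f : ℝ → ℝ}
    (hf : ∀ x ∈ Ico (1/2:ℝ) 1, 0 ≤ f x)
    (h : RegOn r R f (Ico (1/2) 1)) {x y : ℝ} (hx : x ∈ Ico (1/2:ℝ) 1) (hy : y ∈ Ico (1/2:ℝ) 1) :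
    f y ≤ f x * (4 * Real.exp R) := by
  have hE : ∀ a b : ℝ, 1/2 ≤ a → b < 1 → a ≤ b →
      Real.exp (R * (Real.log (b / a)) ^ r) ≤ Real.exp R := by
    intro a b ha hb hab
    obtain ⟨l1, l2, _⟩ := log_Y ha hb hab
    have := Real.rpow_le_one l1 l2 hr.le
    apply Real.exp_le_exp.2
    exact mul_le_of_le_one_right hR this
  have f0 := hf x hx
  rcases le_total x y with hxy | hxy
  · have h1 := (h x hx y hy hxy).1
    have h2 := hE x y hx.1 hy.2 hxy
    calc f y ≤ _ := h1
      _ ≤ f x * Real.exp R := by gcongr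
      _ ≤ _ := by have := Real.exp_pos R; gcongr; linarith
  · have h1 := (h y hy x hx hxy).2
    have h2 := hE y x hy.1 hx.2 hxy
    obtain ⟨_, _, l3⟩ := log_Y hy.1 hx.2 hxy
    have hp : 0 ≤ x / y := div_nonneg (by linarith [hx.1]) (by linarith [hy.1])
    calc f y ≤ _ := h1
      _ ≤ f x * (2 ^ 2) * Real.exp R := by gcongr
      _ = _ := by ring

lemma Y_lower {r R : ℝ} (hr : 0 < r) (hR : 0 ≤ R) {f : ℝ → ℝ} (h : Good r R f)
    {x : ℝ} (hx : x ∈ Ico (1/2:ℝ) 1) :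
    (∫ y in Ioo (1/2) 1, f y) / (2 * Real.exp R) ≤ f x := by
  have h1 : ∫ y in Ioo (1/2) 1, f y ≤ ∫ y in Ioo (1/2:ℝ) 1, f x * (4 * Real.exp R) := by
    apply setIntegral_mono_on (h.int.mono_set (Ioo_subset_Ioo_left (by norm_num)))
      (integrableOn_const (by simp) (by finiteness)) measurableSet_Ioo
    intro y hy
    exact Y_pair hr hR (fun x hx => h.nn x ⟨by linarith [hx.1], hx.2⟩) h.right hx ⟨hy.1.le, hy.2⟩
  have h2 : ∫ y in Ioo (1/2:ℝ) 1, f x * (4 * Real.exp R) = f x * (2 * Real.exp R) := by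
    rw [setIntegral_const]
    simp
    norm_num
    ring
  rw [div_le_iff₀ (by positivity)]
  linarith

lemma iter_add (n : ℕ) (f g : ℝ → ℝ) :
    (opL z)^[n] (fun x => f x + g x) = fun x => (opL z)^[n] f x + (opL z)^[n] g x := by
  have := iter_sub (z := z) n (fun x => f x + g x) g
  funext x
  have h2 := congrFun this x
  simp only [add_sub_cancel_right] at h2
  have h3 : (opL z)^[n] (fun x => f x) x = (opL z)^[n] f x := rfl
  linarith

lemma iter_lower (hz : 0 < z) (hz1 : z < 1) {u : ℝ} (hu : 0 < u) (hu1 : u ≤ 1)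
    (hul : ∀ n, ∀ x ∈ Ioo (0:ℝ) 1, u ≤ h z n x)
    {r R : ℝ} (hr : 0 < r) (hR : 0 ≤ R) (N : ℕ) {f : ℝ → ℝ} (hf : Good r R f) :
    ∀ x ∈ Ico (1/2:ℝ) 1,
      u / (4 * Real.exp R) * ((∫ t in Ioo 0 1, f t) - ∫ t in Ioo 0 (X z (N + 1)), f t)
        ≤ (opL z)^[N] f x := by
  have eR := Real.exp_pos R
  induction N generalizing f with
  | zero =>
    intro x hx
    have h1 := Y_lower hr hR hf hx
    have hX : X z (0 + 1) = 1/2 := by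
      rw [X_succ]
      exact Phi_one hz
    rw [hX, split_integral hf.int, add_sub_cancel_left]
    have hm : 0 ≤ ∫ y in Ioo (1/2) 1, f y :=
      setIntegral_nonneg measurableSet_Ioo (fun y hy => hf.nn y ⟨by linarith [hy.1], hy.2⟩)
    set m := ∫ y in Ioo (1/2) 1, f y
    simp only [Function.iterate_zero, id]
    refine le_trans ?_ h1
    rw [div_mul_eq_mul_div, div_le_div_iff₀ (by positivity) (by positivity)]
    have : u * m ≤ m := mul_le_of_le_one_left hm hu1
    nlinarith
  | succ N ih =>
    intro x hx
    have hxI : x ∈ Ioo (0:ℝ) 1 := ⟨by linarith [hx.1], hx.2⟩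
    have hm : 0 ≤ ∫ y in Ioo (1/2) 1, f y :=
      setIntegral_nonneg measurableSet_Ioo (fun y hy => hf.nn y ⟨by linarith [hy.1], hy.2⟩)
    have e1 : (opL z)^[N + 1] f x = (opL z)^[N] (opA z f) x + (opL z)^[N] (opB f) x := by
      rw [Function.iterate_succ_apply]
      exact congrFun (iter_add N (opA z f) (opB f)) x
    have h1 := ih (hf.opA hz hz1 hr hR) x hx
    have m1 := opA_mass hz f 1
    rw [Phi_one hz] at m1
    have m2 := opA_mass hz f (X z (N + 1))
    rw [← X_succ] at m2
    rw [m1, m2] at h1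
    set m := ∫ y in Ioo (1/2) 1, f y with hmdef
    have h2 : m / (4 * Real.exp R) * u ≤ (opL z)^[N] (opB f) x := by
      have hB : ∀ t ∈ Ioo (0:ℝ) 1, m / (4 * Real.exp R) * (fun _ => (1:ℝ)) t ≤ opB f t := by
        intro t ht
        have := Y_lower hr hR hf (x := (1 + t) / 2) ⟨by linarith [ht.1], by linarith [ht.2]⟩
        have e : m / (4 * Real.exp R) = m / (2 * Real.exp R) / 2 := by field_simp; norm_num
        simp only [opB, mul_one]
        rw [e]
        linarith
      have := iter_mono hz N hB x hxI
      rw [iter_smul] at this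
      refine le_trans ?_ this
      exact mul_le_mul_of_nonneg_left (hul N x hxI) (by positivity)
    rw [e1, split_integral hf.int, ← hmdef]
    have e3 : m / (4 * Real.exp R) * u = u / (4 * Real.exp R) * m := by ring
    rw [e3] at h2
    linear_combination h1 + h2

lemma exp_sub_one_le {a : ℝ} : Real.exp a - 1 ≤ a * Real.exp a := by
  have h := Real.add_one_le_exp (-a)
  have : Real.exp (-a) * Real.exp a = 1 := by rw [← Real.exp_add]; simp
  nlinarith [Real.exp_pos a]

lemma RegOn.sub_const {r R R1 c K : ℝ} (hr1 : r ≤ 1) (hR1 : 0 ≤ R1) (hR : R1 < R)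
    (hc : 0 ≤ c) (hK : K = (R + 2) * Real.exp (R + 2) / (R - R1)) {f : ℝ → ℝ} (hr : 0 < r)
    (h : RegOn r R1 f (Ico (1/2) 1)) (hlow : ∀ x ∈ Ico (1/2:ℝ) 1, K * c ≤ f x) :
    RegOn r R (fun x => f x - c) (Ico (1/2) 1) := by
  intro x' hx' x hx hxx
  obtain ⟨h1, h2⟩ := h x' hx' x hx hxx
  obtain ⟨l0, l1, l2⟩ := log_Y hx'.1 hx.2 hxx
  have px' : 0 < x' := by linarith [hx'.1]
  have px : 0 < x := by linarith [hx.1]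
  set l := Real.log (x / x') with hl
  have hld : l ≤ l ^ r := by
    rcases eq_or_lt_of_le l0 with h0 | h0
    · rw [← h0]; positivity
    · have := Real.rpow_le_rpow_of_exponent_ge h0 l1 hr1
      rwa [Real.rpow_one] at this
  have hd1 : l ^ r ≤ 1 := Real.rpow_le_one l0 l1 hr.le
  have hd0 : 0 ≤ l ^ r := by positivity
  set d := l ^ r
  have hRR : 0 < R - R1 := by linarith
  have R0 : 0 ≤ R := by linarith
  have hT : (x / x') ^ 2 = Real.exp (2 * l) := by
    have : Real.exp l = x / x' := by rw [hl, Real.exp_log (by positivity)]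
    rw [two_mul, Real.exp_add, this]; ring
  have hdiff : (R - R1) * d ≤ Real.exp (R * d) - Real.exp (R1 * d) := by
    have e : Real.exp (R * d) = Real.exp (R1 * d) * Real.exp ((R - R1) * d) := by
      rw [← Real.exp_add]; ring_nf
    have a1 := Real.add_one_le_exp ((R - R1) * d)
    have a2 := Real.one_le_exp (show 0 ≤ R1 * d by positivity)
    have a3 : 0 ≤ (R - R1) * d := by positivity
    rw [e]
    nlinarith
  have hbig : Real.exp ((R + 2) * d) - 1 ≤ (R + 2) * d * Real.exp (R + 2) := by
    have a1 := exp_sub_one_le (a := (R + 2) * d)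
    have a2 : Real.exp ((R + 2) * d) ≤ Real.exp (R + 2) := by
      apply Real.exp_le_exp.2
      exact mul_le_of_le_one_right (by linarith) hd1
    have a3 : 0 ≤ (R + 2) * d := mul_nonneg (by linarith) hd0
    nlinarith
  have hKe : K * (R - R1) = (R + 2) * Real.exp (R + 2) := by rw [hK]; field_simp
  have hTE : Real.exp (2 * l) * Real.exp (R * d) ≤ Real.exp ((R + 2) * d) := by
    rw [← Real.exp_add]
    apply Real.exp_le_exp.2
    nlinarith
  have hT1 : 1 ≤ Real.exp (2 * l) := Real.one_le_exp (by positivity)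
  have main : ∀ v, K * c ≤ v → c * (Real.exp ((R + 2) * d) - 1) ≤
      v * (Real.exp (R * d) - Real.exp (R1 * d)) := by
    intro v hv
    have K0 : 0 ≤ K := by rw [hK]; apply div_nonneg _ hRR.le; positivity
    calc c * (Real.exp ((R + 2) * d) - 1) ≤ c * ((R + 2) * d * Real.exp (R + 2)) := by gcongr
      _ = (K * c) * ((R - R1) * d) := by linear_combination (-c * d) * hKe
      _ ≤ v * ((R - R1) * d) := by gcongr
      _ ≤ _ := by
        have : 0 ≤ v := le_trans (by positivity) hv
        gcongr
  have E0 := Real.exp_pos (R * d)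
  have E1 := Real.exp_pos (R1 * d)
  simp only
  constructor
  · have m := main _ (hlow x' hx')
    have : Real.exp (R * d) ≤ Real.exp ((R + 2) * d) := by nlinarith
    nlinarith
  · have m := main _ (hlow x hx)
    rw [hT] at h2 ⊢
    have v0 : 0 ≤ f x * (Real.exp (R * d) - Real.exp (R1 * d)) := by
      refine le_trans ?_ m
      apply mul_nonneg hc
      have : 1 ≤ Real.exp ((R + 2) * d) := Real.one_le_exp (by positivity)
      linarith
    have a1 : c * (Real.exp (2 * l) * Real.exp (R * d) - 1) ≤ c * (Real.exp ((R + 2) * d) - 1) := by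
      gcongr
    have a2 := mul_le_mul_of_nonneg_right hT1 v0
    nlinarith

end coupling

section step
variable {z : ℝ}

lemma Good.iter_reg (hz : 0 < z) (hz1 : z < 1) {r R : ℝ} (hr : 0 < r) (hR : 0 ≤ R) {N : ℕ}
    (hN : 1 ≤ N) {f : ℝ → ℝ} (h : Good r R f) :
    RegOn r (R * (1/2) ^ r) ((LSV.opL z)^[N] f) (Ioo 0 1) := by
  obtain ⟨n, rfl⟩ : ∃ n, N = n + 1 := ⟨N - 1, by omega⟩
  rw [Function.iterate_succ_apply']
  exact (h.iter hz hz1 hr hR n).regL hz hz1 hr hR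

lemma ind_mass (c : ℝ) : IntegrableOn ((Ico (1/2:ℝ) 1).indicator (fun _ => c)) (Ioo 0 1) ∧
    ∫ x in Ioo (0:ℝ) 1, (Ico (1/2:ℝ) 1).indicator (fun _ => c) x = c / 2 := by
  have hI : Ioo (0:ℝ) 1 ∩ Ico (1/2:ℝ) 1 = Ico (1/2) 1 := by
    apply inter_eq_right.2
    intro x hx
    exact ⟨by linarith [hx.1], hx.2⟩
  constructor
  · apply Integrable.indicator _ measurableSet_Ico
    exact integrableOn_const (by simp) (by finiteness)
  · rw [setIntegral_indicator measurableSet_Ico, hI, setIntegral_const]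
    simp
    norm_num
    ring

lemma step (hz : 0 < z) (hz1 : z < 1) {r R : ℝ} (hr : 0 < r) (hr1 : r ≤ 1) (hR : 0 < R) :
    ∃ κ : ℝ, 0 < κ ∧ κ ≤ 1 ∧ ∀ (N m : ℕ) (E s : ℝ) (f : ℝ → ℝ), 1 ≤ N → 0 ≤ E → 0 ≤ s →
      Good r R f → ∫ x in Ioo 0 1, f x = s → (∀ x ∈ Ioo (0:ℝ) 1, f x ≤ E * h z m x) →
      6 * E * ((X z (N + 1)) ^ (1 - z) / (1 - z)) ≤ s / 2 →
      Good r R (fun x => (opL z)^[N] f x - (Ico (1/2:ℝ) 1).indicator (fun _ => κ * s) x) ∧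
      ∫ x in Ioo 0 1, ((opL z)^[N] f x - (Ico (1/2:ℝ) 1).indicator (fun _ => κ * s) x)
        = (1 - κ / 2) * s ∧
      ∀ x ∈ Ioo (0:ℝ) 1, (opL z)^[N] f x - (Ico (1/2:ℝ) 1).indicator (fun _ => κ * s) x
        ≤ E * h z (m + N) x := by
  obtain ⟨u, hu, hu1, hul⟩ := h_lower hz hz1
  set R1 := R * (1/2:ℝ) ^ r with hR1
  have hR1n : 0 ≤ R1 := by positivity
  have hR1lt : R1 < R := mul_lt_of_lt_one_right hR (half_rpow_lt hr)
  set K := (R + 2) * Real.exp (R + 2) / (R - R1) with hK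
  have hRR : 0 < R - R1 := by linarith
  have hK1 : 1 ≤ K := by
    rw [hK, le_div_iff₀ hRR]
    have := Real.one_le_exp (show 0 ≤ R + 2 by linarith)
    nlinarith
  have eR := Real.one_le_exp hR.le
  have hκ : 0 < u / (8 * Real.exp R * K) := by positivity
  have hκ1 : u / (8 * Real.exp R * K) ≤ 1 := by
    rw [div_le_one (by positivity)]
    nlinarith
  refine ⟨u / (8 * Real.exp R * K), hκ, hκ1, ?_⟩
  set κ := u / (8 * Real.exp R * K) with hκdef
  intro N m E s f hN hE hs hf hmass hfE hX
  have hit := hf.iter hz hz1 hr hR.le N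
  have hreg := hf.iter_reg hz hz1 hr hR.le hN
  obtain ⟨x0, x1⟩ := X_mem hz (N + 1)
  have htail : ∫ x in Ioo 0 (X z (N + 1)), f x ≤ s / 2 := by
    refine le_trans (env_mass hz1 (E := 6 * E) hf.int x0 x1 ?_) hX
    intro x hx
    have := mul_le_mul_of_nonneg_left (h_env hz hz1 m x hx) hE
    linarith [hfE x hx]
  have hlow : ∀ x ∈ Ico (1/2:ℝ) 1, K * (κ * s) ≤ (opL z)^[N] f x := by
    intro x hx
    have := iter_lower hz hz1 hu hu1 hul hr hR.le N hf x hx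
    refine le_trans ?_ this
    have e : K * (κ * s) = u / (4 * Real.exp R) * (s / 2) := by
      rw [hκdef]; field_simp; ring
    rw [e, hmass]
    apply mul_le_mul_of_nonneg_left _ (by positivity)
    linarith
  have hκs : 0 ≤ κ * s := by positivity
  obtain ⟨hi1, hi2⟩ := ind_mass (κ * s)
  refine ⟨⟨?_, ?_, ?_, ?_, ?_⟩, ?_, ?_⟩
  · exact hit.meas.sub (measurable_const.indicator measurableSet_Ico)
  · exact hit.int.sub hi1
  · intro x hx
    by_cases hxY : x ∈ Ico (1/2:ℝ) 1
    · simp only [indicator_of_mem hxY]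
      have := hlow x hxY
      nlinarith
    · simp only [indicator_of_notMem hxY, sub_zero]
      exact hit.nn x hx
  · intro x' hx' x hx hxx
    have a1 : x' ∉ Ico (1/2:ℝ) 1 := fun hh => by linarith [hh.1, hx'.2]
    have a2 : x ∉ Ico (1/2:ℝ) 1 := fun hh => by linarith [hh.1, hx.2]
    simp only [indicator_of_notMem a1, indicator_of_notMem a2, sub_zero]
    exact hit.left x' hx' x hx hxx
  · have hY : RegOn r R1 ((opL z)^[N] f) (Ico (1/2) 1) :=
      hreg.mono le_rfl (fun x hx => ⟨by linarith [hx.1], hx.2⟩)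
        (fun x hx => hit.nn x ⟨by linarith [hx.1], hx.2⟩) (fun x hx => by linarith [hx.1])
    have := RegOn.sub_const hr1 hR1n hR1lt hκs hK hr hY hlow
    intro x' hx' x hx hxx
    have := this x' hx' x hx hxx
    simpa only [indicator_of_mem hx', indicator_of_mem hx] using this
  · rw [integral_sub hit.int hi1, hi2, iter_mass hz N hf.int, hmass]
    ring
  · intro x hx
    have h1 := iter_mono hz N hfE x hx
    have h2 := congrFun (iter_smul (z := z) N E (h z m)) x
    rw [h2, h_add] at h1
    have : 0 ≤ (Ico (1/2:ℝ) 1).indicator (fun _ => κ * s) x :=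
      indicator_nonneg (fun _ _ => hκs) x
    linarith

/-- coupling induction -/
lemma couple (hz : 0 < z) (hz1 : z < 1) {r R : ℝ} (hr : 0 < r) (hr1 : r ≤ 1) (hR : 0 < R) :
    ∃ θ : ℝ, 0 < θ ∧ θ < 1 ∧ ∀ (k : ℕ) (E s : ℝ) (f g : ℝ → ℝ) (Nf : ℕ → ℕ), 0 ≤ E → 1 ≤ s →
      Good r R f → Good r R g → ∫ x in Ioo 0 1, f x = s → ∫ x in Ioo 0 1, g x = s →
      (∀ x ∈ Ioo (0:ℝ) 1, f x ≤ E * h z k x) → (∀ x ∈ Ioo (0:ℝ) 1, g x ≤ E * h z k x) →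
      (∀ j, 1 ≤ Nf j) →
      (∀ j, 6 * E * ((X z (Nf j + 1)) ^ (1 - z) / (1 - z)) ≤ θ ^ j / 2) →
      ∀ j, ∃ F H : ℝ → ℝ, (Good r R F ∧ Good r R H) ∧ ∫ x in Ioo 0 1, F x = θ ^ j * s ∧
        ∫ x in Ioo 0 1, H x = θ ^ j * s ∧
        (∃ m, (∀ x ∈ Ioo (0:ℝ) 1, F x ≤ E * h z m x) ∧ (∀ x ∈ Ioo (0:ℝ) 1, H x ≤ E * h z m x)) ∧
        (fun x => (opL z)^[∑ i ∈ Finset.range j, Nf i] f x - (opL z)^[∑ i ∈ Finset.range j, Nf i] g x)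
          = fun x => F x - H x := by
  obtain ⟨κ, hκ, hκ1, hstep⟩ := step hz hz1 hr hr1 hR
  refine ⟨1 - κ / 2, by linarith, by linarith, ?_⟩
  set θ := 1 - κ / 2 with hθ
  have hθ0 : 0 < θ := by linarith
  intro k E s f g Nf hE hs hf hg hfm hgm hfE hgE hN hX j
  induction j with
  | zero => exact ⟨f, g, ⟨hf, hg⟩, by simpa using hfm, by simpa using hgm, ⟨k, hfE, hgE⟩, by simp⟩
  | succ j ih =>
    obtain ⟨F, H, ⟨hF, hH⟩, hFm, hHm, ⟨m, hFE, hHE⟩, heq⟩ := ih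
    have hpos : 0 ≤ θ ^ j * s := by positivity
    have hXj : 6 * E * ((X z (Nf j + 1)) ^ (1 - z) / (1 - z)) ≤ θ ^ j * s / 2 := by
      refine (hX j).trans ?_
      have : θ ^ j ≤ θ ^ j * s := le_mul_of_one_le_right (by positivity) hs
      linarith
    obtain ⟨a1, a2, a3⟩ := hstep (Nf j) m E _ F (hN j) hE hpos hF hFm hFE hXj
    obtain ⟨b1, b2, b3⟩ := hstep (Nf j) m E _ H (hN j) hE hpos hH hHm hHE hXj
    refine ⟨_, _, ⟨a1, b1⟩, ?_, ?_, ⟨m + Nf j, a3, b3⟩, ?_⟩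
    · rw [a2, pow_succ]; ring
    · rw [b2, pow_succ]; ring
    · have e1 := iter_sub (z := z) (Nf j) ((opL z)^[∑ i ∈ Finset.range j, Nf i] f)
        ((opL z)^[∑ i ∈ Finset.range j, Nf i] g)
      have e2 := iter_sub (z := z) (Nf j) F H
      rw [heq] at e1
      rw [Finset.sum_range_succ, add_comm _ (Nf j), Function.iterate_add_apply,
        Function.iterate_add_apply]
      rw [← e1, e2]
      funext x
      ring

lemma couple_bound (hz : 0 < z) {r R : ℝ} {F H f g ψ : ℝ → ℝ} (hf : IntegrableOn f (Ioo 0 1))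
    (hg : IntegrableOn g (Ioo 0 1)) (hF : Good r R F) (hH : Good r R H)
    {σ M : ℝ} (hFm : ∫ x in Ioo 0 1, F x = σ) (hHm : ∫ x in Ioo 0 1, H x = σ) {t n : ℕ} (htn : t ≤ n)
    (heq : (fun x => (opL z)^[t] f x - (opL z)^[t] g x) = fun x => F x - H x)
    (hψ : Measurable ψ) (hM : ∀ x, |ψ x| ≤ M) :
    |(∫ x in Ioo 0 1, f x * ψ ((lsv z)^[n] x)) - ∫ x in Ioo 0 1, g x * ψ ((lsv z)^[n] x)|
      ≤ 2 * M * σ := by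
  obtain ⟨d, rfl⟩ : ∃ d, n = d + t := ⟨n - t, by omega⟩
  have key : ∀ W : ℝ → ℝ, IntegrableOn W (Ioo 0 1) → (∀ x ∈ Ioo (0:ℝ) 1, 0 ≤ W x) →
      ∫ x in Ioo 0 1, W x = σ → |∫ x in Ioo 0 1, (opL z)^[d] W x * ψ x| ≤ M * σ := by
    intro W hW hn hm
    have hW2 := iter_integrable hz d hW
    have hn2 := iter_nonneg hz d hn
    calc |∫ x in Ioo 0 1, (opL z)^[d] W x * ψ x|
        ≤ ∫ x in Ioo 0 1, |(opL z)^[d] W x * ψ x| := abs_integral_le_integral_abs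
      _ ≤ ∫ x in Ioo 0 1, M * (opL z)^[d] W x := by
          apply setIntegral_mono_on (bdd_mul_integrable hW2 hψ hM).abs (hW2.const_mul M)
            measurableSet_Ioo
          intro x hx
          rw [abs_mul, abs_of_nonneg (hn2 x hx), mul_comm]
          exact mul_le_mul_of_nonneg_right (hM x) (hn2 x hx)
      _ = M * σ := by rw [integral_const_mul, iter_mass hz d hW, hm]
  have kF := key F hF.int hF.nn hFm
  have kH := key H hH.int hH.nn hHm
  have e : (∫ x in Ioo 0 1, f x * ψ ((lsv z)^[d + t] x)) -
      (∫ x in Ioo 0 1, g x * ψ ((lsv z)^[d + t] x)) =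
      (∫ x in Ioo 0 1, (opL z)^[d] F x * ψ x) - ∫ x in Ioo 0 1, (opL z)^[d] H x * ψ x := by
    rw [← iter_duality hz _ hf hψ hM, ← iter_duality hz _ hg hψ hM]
    rw [← integral_sub (bdd_mul_integrable (iter_integrable hz _ hf) hψ hM)
      (bdd_mul_integrable (iter_integrable hz _ hg) hψ hM),
      ← integral_sub (bdd_mul_integrable (iter_integrable hz _ hF.int) hψ hM)
      (bdd_mul_integrable (iter_integrable hz _ hH.int) hψ hM)]
    congr 1
    funext x
    have e1 := iter_sub (z := z) d ((opL z)^[t] f) ((opL z)^[t] g)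
    have e2 := iter_sub (z := z) d F H
    rw [heq, e2] at e1
    have := congrFun e1 x
    rw [Function.iterate_add_apply, Function.iterate_add_apply]
    linear_combination (-ψ x) * this
  rw [e]
  rw [abs_le] at *
  constructor <;> linarith [kF.1, kF.2, kH.1, kH.2]

end step

section rate
variable {z : ℝ}

lemma X_pow_bound (hz : 0 < z) (hz1 : z < 1) {N : ℕ} {v : ℝ} (hv : 0 < v) (hN : v ≤ N) :
    (X z N) ^ (1 - z) ≤ (3 / (z * v)) ^ (1 / z - 1) := by
  obtain ⟨x0, x1⟩ := X_mem hz N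
  have h1 := X_bound hz hz1 N
  have hγ : 0 < 1 / z - 1 := by
    have := one_lt_one_div hz hz1
    linarith
  have e : (X z N) ^ (1 - z) = ((X z N) ^ z) ^ (1 / z - 1) := by
    rw [← Real.rpow_mul x0.le]
    congr 1
    field_simp
  rw [e]
  apply Real.rpow_le_rpow (by positivity) _ hγ.le
  have hp : 0 < (X z N) ^ z := by positivity
  have h2 : z / 3 * v ≤ ((X z N) ^ z)⁻¹ := le_trans (by gcongr) h1
  rw [le_inv_comm₀ (by positivity) hp] at h2
  refine h2.trans (le_of_eq ?_)
  field_simp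

lemma rate (hz : 0 < z) (hz1 : z < 1) {r R : ℝ} (hr : 0 < r) (hr1 : r ≤ 1) (hR : 0 < R) {E : ℝ}
    (hE : 0 ≤ E) :
    ∃ C : ℝ, 0 ≤ C ∧ ∀ (k : ℕ) (s : ℝ) (f g : ℝ → ℝ), 1 ≤ s →
      Good r R f → Good r R g → ∫ x in Ioo 0 1, f x = s → ∫ x in Ioo 0 1, g x = s →
      (∀ x ∈ Ioo (0:ℝ) 1, f x ≤ E * h z k x) → (∀ x ∈ Ioo (0:ℝ) 1, g x ≤ E * h z k x) →
      ∀ n : ℕ, 1 ≤ n → ∀ (ψ : ℝ → ℝ) (M : ℝ), Measurable ψ → (∀ x, |ψ x| ≤ M) →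
      |(∫ x in Ioo 0 1, f x * ψ ((lsv z)^[n] x)) - ∫ x in Ioo 0 1, g x * ψ ((lsv z)^[n] x)|
        ≤ C * M * s * (n : ℝ) ^ (-(1 / z - 1)) := by
  obtain ⟨θ, hθ0, hθ1, hc⟩ := couple hz hz1 hr hr1 hR
  have hγ : 0 < 1 / z - 1 := by
    have := one_lt_one_div hz hz1
    linarith
  set γ := 1 / z - 1 with hγd
  set lam := θ ^ (-(1 / γ)) with hlam
  have hlam1 : 1 < lam := Real.one_lt_rpow_of_pos_of_lt_one_of_neg hθ0 hθ1 (by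
    have : 0 < 1 / γ := by positivity
    linarith)
  have hlam0 : 0 < lam := by linarith
  have hlamγ : lam ^ (-γ) = θ := by
    rw [hlam, ← Real.rpow_mul hθ0.le]
    have : -(1 / γ) * -γ = 1 := by field_simp
    rw [this, Real.rpow_one]
  have hlamj : ∀ j : ℕ, (lam ^ j) ^ (-γ) = θ ^ j := by
    intro j
    rw [← Real.rpow_natCast, ← Real.rpow_mul hlam0.le, mul_comm, Real.rpow_mul hlam0.le, hlamγ,
      Real.rpow_natCast]
  set D := 6 * E / (1 - z) with hD
  have h1z : 0 < 1 - z := by linarith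
  have hD0 : 0 ≤ D := by positivity
  set H := 3 / z * (2 * D + 1) ^ (1 / γ) with hH
  have hH1 : 1 ≤ H := by
    have a1 : 1 ≤ 3 / z := by rw [le_div_iff₀ hz]; linarith
    have a2 : 1 ≤ (2 * D + 1) ^ (1 / γ) := Real.one_le_rpow (by linarith) (by positivity)
    nlinarith
  have hH0 : 0 < H := by linarith
  have hlj : ∀ j : ℕ, 1 ≤ lam ^ j := fun j => one_le_pow₀ hlam1.le
  set Nf : ℕ → ℕ := fun j => ⌈H * lam ^ j⌉₊ with hNf
  have hNlow : ∀ j, H * lam ^ j ≤ Nf j := fun j => Nat.le_ceil _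
  have hN1 : ∀ j, 1 ≤ Nf j := fun j => Nat.one_le_ceil_iff.2 (by have := hlj j; positivity)
  have hNup : ∀ j, (Nf j : ℝ) ≤ 2 * H * lam ^ j := by
    intro j
    have h1 := Nat.ceil_lt_add_one (show 0 ≤ H * lam ^ j by positivity)
    have h2 := hlj j
    have : (Nf j : ℝ) < H * lam ^ j + 1 := h1
    nlinarith
  have hX : ∀ j, 6 * E * ((X z (Nf j + 1)) ^ (1 - z) / (1 - z)) ≤ θ ^ j / 2 := by
    intro j
    have h1 := X_pow_bound hz hz1 (N := Nf j + 1) (v := H * lam ^ j) (by positivity)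
      (by push_cast; linarith [hNlow j])
    have e : (3 / (z * (H * lam ^ j))) ^ γ = (2 * D + 1)⁻¹ * θ ^ j := by
      have e1 : 3 / (z * (H * lam ^ j)) = ((2 * D + 1) ^ (1 / γ))⁻¹ * (lam ^ j)⁻¹ := by
        rw [hH]; field_simp
      rw [e1, Real.mul_rpow (by positivity) (by positivity), Real.inv_rpow (by positivity),
        Real.inv_rpow (by positivity), ← Real.rpow_mul (by positivity), ← hlamj j,
        Real.rpow_neg (by positivity)]
      rw [one_div_mul_cancel hγ.ne', Real.rpow_one]
    rw [← hγd, e] at h1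
    have e2 : 6 * E * ((X z (Nf j + 1)) ^ (1 - z) / (1 - z)) = D * (X z (Nf j + 1)) ^ (1 - z) := by
      rw [hD]; ring
    rw [e2]
    calc D * (X z (Nf j + 1)) ^ (1 - z) ≤ D * ((2 * D + 1)⁻¹ * θ ^ j) := by gcongr
      _ = (D / (2 * D + 1)) * θ ^ j := by ring
      _ ≤ (1 / 2) * θ ^ j := by
          gcongr ?_ * _
          rw [div_le_div_iff₀ (by positivity) (by norm_num)]
          linarith
      _ = _ := by ring
  set Q := 2 * H / (lam - 1) with hQ
  have hl1 : 0 < lam - 1 := by linarith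
  have hQ0 : 0 < Q := by positivity
  have ht : ∀ j, ((∑ i ∈ Finset.range j, Nf i : ℕ) : ℝ) ≤ Q * lam ^ j := by
    intro j
    induction j with
    | zero => simp; positivity
    | succ j ih =>
      rw [Finset.sum_range_succ, Nat.cast_add]
      have e : Q * lam ^ (j + 1) = Q * lam ^ j + 2 * H * lam ^ j := by
        rw [hQ, pow_succ]; field_simp; ring
      rw [e]
      linarith [hNup j]
  refine ⟨2 * (Q ^ γ / θ), by positivity, ?_⟩
  intro k s f g hs hf hg hfm hgm hfE hgE n hn ψ M hψ hM
  have hM0 : 0 ≤ M := (abs_nonneg _).trans (hM 0)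
  have hn0 : (0:ℝ) < n := by exact_mod_cast hn
  have hcj := hc k E s f g Nf hE hs hf hg hfm hgm hfE hgE hN1 hX
  have hbd : ∀ j, (∑ i ∈ Finset.range j, Nf i) ≤ n →
      |(∫ x in Ioo 0 1, f x * ψ ((lsv z)^[n] x)) - ∫ x in Ioo 0 1, g x * ψ ((lsv z)^[n] x)|
        ≤ 2 * M * (θ ^ j * s) := by
    intro j hj
    obtain ⟨F, G, ⟨hF, hG⟩, hFm, hGm, _, heq⟩ := hcj j
    exact couple_bound hz hf.int hg.int hF hG hFm hGm hj heq hψ hM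
  suffices hs2 : ∃ j, (∑ i ∈ Finset.range j, Nf i) ≤ n ∧
      θ ^ j ≤ Q ^ γ / θ * (n : ℝ) ^ (-γ) by
    obtain ⟨j, hj1, hj2⟩ := hs2
    refine (hbd j hj1).trans ?_
    calc 2 * M * (θ ^ j * s) ≤ 2 * M * ((Q ^ γ / θ * (n : ℝ) ^ (-γ)) * s) := by gcongr
      _ = _ := by ring
  have hmain : ∀ j : ℕ, (n : ℝ) ≤ Q * lam ^ (j + 1) → θ ^ j ≤ Q ^ γ / θ * (n : ℝ) ^ (-γ) := by
    intro j hj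
    have h1 : (Q * lam ^ (j + 1)) ^ (-γ) ≤ (n : ℝ) ^ (-γ) :=
      Real.rpow_le_rpow_of_nonpos hn0 hj (by linarith)
    rw [Real.mul_rpow hQ0.le (by positivity), hlamj, Real.rpow_neg hQ0.le, pow_succ] at h1
    have hQγ : 0 < Q ^ γ := by positivity
    calc θ ^ j = Q ^ γ / θ * ((Q ^ γ)⁻¹ * (θ ^ j * θ)) := by field_simp
      _ ≤ _ := by gcongr
  rcases le_total (n : ℝ) Q with hnQ | hnQ
  · refine ⟨0, by simp, hmain 0 ?_⟩
    simp only [zero_add, pow_one]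
    nlinarith
  · obtain ⟨j, hj1, hj2⟩ := exists_nat_pow_near (x := (n : ℝ) / Q) (by rw [le_div_iff₀ hQ0]; linarith)
      hlam1
    rw [le_div_iff₀ hQ0] at hj1
    rw [div_lt_iff₀ hQ0] at hj2
    refine ⟨j, ?_, hmain j (by linarith)⟩
    have := ht j
    exact Nat.cast_le.1 (le_trans this (by linarith) : ((_ : ℕ) : ℝ) ≤ (n : ℝ))

end rate

section propM
variable {z : ℝ}

lemma sub_le_log {x' x : ℝ} (hx' : 0 < x') (hxx : x' ≤ x) (hx : x < 1) :
    x - x' ≤ Real.log (x / x') := by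
  have px : 0 < x := by linarith
  have h1 := Real.log_le_sub_one_of_pos (show 0 < x' / x by positivity)
  have h2 : Real.log (x / x') = - Real.log (x' / x) := by
    rw [← Real.log_inv, inv_div]
  have h3 : x' / x * x = x' := by field_simp
  have h4 : x' / x ≤ 1 := by rw [div_le_one px]; exact hxx
  rw [h2]
  nlinarith

lemma prop_pos (hz : 0 < z) (hz1 : z < 1) {r c B : ℝ} (hr : 0 < r) (hr1 : r ≤ 1) (hc : 0 < c)
    {φ : ℝ → ℝ} (hφm : Measurable φ) (hφ1 : ∀ x, 1 ≤ φ x) (hφB : ∀ x, φ x ≤ B)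
    (hφ : ∀ x' ∈ Ioo (0:ℝ) 1, ∀ x ∈ Ioo (0:ℝ) 1, x' ≤ x → |φ x - φ x'| ≤ c * (x - x') ^ r) :
    ∃ K : ℝ, 0 ≤ K ∧ ∀ (k n : ℕ), 1 ≤ n → ∀ (ψ : ℝ → ℝ) (M : ℝ), Measurable ψ → (∀ x, |ψ x| ≤ M) →
      |(∫ x in Ioo 0 1, φ x * h z k x * ψ ((lsv z)^[n] x)) -
        (∫ x in Ioo 0 1, φ x * h z k x) * ∫ x in Ioo 0 1, h z (k + n) x * ψ x|
        ≤ K * M * (n : ℝ) ^ (-(1 / z - 1)) := by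
  have hB1 : 1 ≤ B := (hφ1 0).trans (hφB 0)
  have h2r : (0:ℝ) < 2 ^ r := by positivity
  have hR : 0 < c * 2 ^ r := by positivity
  obtain ⟨C, hC, hrate⟩ := rate hz hz1 hr hr1 hR (E := B) (by linarith)
  have hRe : c * 2 ^ r * (1/2:ℝ) ^ r = c := by
    rw [mul_assoc, ← Real.mul_rpow (by norm_num) (by norm_num)]
    norm_num
  refine ⟨C * B, by positivity, ?_⟩
  intro k n hn ψ M hψ hM
  have hM0 : 0 ≤ M := (abs_nonneg _).trans (hM 0)
  have hφabs : ∀ x, |φ x| ≤ B := fun x => by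
    rw [abs_of_nonneg (by linarith [hφ1 x])]; exact hφB x
  have hk := h_nonneg hz k
  have hreg : RegOn r 0 (h z k) (Ioo 0 1) := h_reg hz hz1 hr k
  have hfi : IntegrableOn (fun x => φ x * h z k x) (Ioo 0 1) := by
    have := bdd_mul_integrable (h_int hz k) hφm hφabs
    simpa only [mul_comm] using this
  have hexp : ∀ x' ∈ Ioo (0:ℝ) 1, ∀ x ∈ Ioo (0:ℝ) 1, x' ≤ x →
      φ x ≤ φ x' * Real.exp (c * (Real.log (x / x')) ^ r) ∧
      φ x' ≤ φ x * Real.exp (c * (Real.log (x / x')) ^ r) := by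
    intro x' hx' x hx hxx
    have h1 := abs_le.1 (hφ x' hx' x hx hxx)
    have h2 := sub_le_log hx'.1 hxx hx.2
    have h3 : (x - x') ^ r ≤ (Real.log (x / x')) ^ r :=
      Real.rpow_le_rpow (by linarith) h2 hr.le
    have h4 := Real.add_one_le_exp (c * (Real.log (x / x')) ^ r)
    have h5 : c * (x - x') ^ r ≤ c * (Real.log (x / x')) ^ r := by gcongr
    have h6 : 0 ≤ c * (x - x') ^ r := by
      have : 0 ≤ x - x' := by linarith
      positivity
    constructor
    · nlinarith [hφ1 x']
    · nlinarith [hφ1 x]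
  have hf : Good r (c * 2 ^ r) (fun x => φ x * h z k x) := by
    apply Good.of_reg hr hR.le (hφm.mul (h_meas hz k)) hfi
    · intro x hx
      have := hφ1 x
      exact mul_nonneg (by linarith) (hk x hx)
    · rw [hRe]
      intro x' hx' x hx hxx
      obtain ⟨a1, a2⟩ := hexp x' hx' x hx hxx
      obtain ⟨b1, b2⟩ := hreg x' hx' x hx hxx
      simp only [zero_mul, Real.exp_zero, mul_one] at b1 b2
      have p1 := hφ1 x
      have p2 := hφ1 x'
      have e0 := Real.exp_pos (c * (Real.log (x / x')) ^ r)
      constructor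
      · calc φ x * h z k x ≤ (φ x' * Real.exp (c * (Real.log (x / x')) ^ r)) * h z k x' :=
            mul_le_mul a1 b1 (hk x hx) (by positivity)
          _ = _ := by simp only [Pi.mul_apply]; ring
      · calc φ x' * h z k x' ≤ (φ x * Real.exp (c * (Real.log (x / x')) ^ r)) *
              (h z k x * (x / x') ^ 2) :=
            mul_le_mul a2 b2 (hk x' hx') (by positivity)
          _ = _ := by simp only [Pi.mul_apply]; ring
  set s := ∫ x in Ioo 0 1, φ x * h z k x with hs
  have hs1 : 1 ≤ s := by
    rw [← h_mass hz k, hs]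
    apply setIntegral_mono_on (h_int hz k) hfi measurableSet_Ioo
    intro x hx
    exact le_mul_of_one_le_left (hk x hx) (hφ1 x)
  have hsB : s ≤ B := by
    have : s ≤ ∫ x in Ioo 0 1, B * h z k x := by
      apply setIntegral_mono_on hfi ((h_int hz k).const_mul B) measurableSet_Ioo
      intro x hx
      exact mul_le_mul_of_nonneg_right (hφB x) (hk x hx)
    rwa [integral_const_mul, h_mass hz k, mul_one] at this
  have hg : Good r (c * 2 ^ r) (fun x => s * h z k x) := by
    apply Good.of_reg hr hR.le ((h_meas hz k).const_mul s) ((h_int hz k).const_mul s)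
    · intro x hx
      exact mul_nonneg (by linarith) (hk x hx)
    · rw [hRe]
      apply RegOn.mono (R := 0) (S := Ioo 0 1) _ hc.le subset_rfl
        (fun x hx => mul_nonneg (by linarith) (hk x hx)) (fun x hx => hx.1)
      intro x' hx' x hx hxx
      obtain ⟨b1, b2⟩ := hreg x' hx' x hx hxx
      simp only [zero_mul, Real.exp_zero, mul_one] at b1 b2 ⊢
      rw [mul_assoc]
      exact ⟨mul_le_mul_of_nonneg_left b1 (by linarith), mul_le_mul_of_nonneg_left b2 (by linarith)⟩
  have hmain := hrate k s _ _ hs1 hf hg hs.symm (by rw [integral_const_mul, h_mass hz k, mul_one])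
    (fun x hx => mul_le_mul_of_nonneg_right (hφB x) (hk x hx))
    (fun x hx => mul_le_mul_of_nonneg_right hsB (hk x hx)) n hn ψ M hψ hM
  have e : ∫ x in Ioo 0 1, s * h z k x * ψ ((lsv z)^[n] x) =
      s * ∫ x in Ioo 0 1, h z (k + n) x * ψ x := by
    rw [← h_add, iter_duality hz n (h_int hz k) hψ hM, ← integral_const_mul]
    congr 1
    funext x
    ring
  rw [e] at hmain
  refine hmain.trans ?_
  have : C * M * s ≤ C * B * M := by
    have := mul_le_mul_of_nonneg_left hsB (mul_nonneg hC hM0)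
    linarith
  gcongr

lemma prop_gen (hz : 0 < z) (hz1 : z < 1) {r c b : ℝ} (hr : 0 < r) (hr1 : r ≤ 1) (hc : 0 < c)
    {φ : ℝ → ℝ} (hφm : Measurable φ) (hφb : ∀ x, |φ x| ≤ b)
    (hφ : ∀ x' ∈ Ioo (0:ℝ) 1, ∀ x ∈ Ioo (0:ℝ) 1, x' ≤ x → |φ x - φ x'| ≤ c * (x - x') ^ r) :
    ∃ K : ℝ, 0 ≤ K ∧ ∀ (k n : ℕ), 1 ≤ n → ∀ (ψ : ℝ → ℝ) (M : ℝ), Measurable ψ → (∀ x, |ψ x| ≤ M) →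
      |(∫ x in Ioo 0 1, φ x * h z k x * ψ ((lsv z)^[n] x)) -
        (∫ x in Ioo 0 1, φ x * h z k x) * ∫ x in Ioo 0 1, h z (k + n) x * ψ x|
        ≤ K * M * (n : ℝ) ^ (-(1 / z - 1)) := by
  obtain ⟨K, hK, hmain⟩ := prop_pos hz hz1 hr hr1 hc (φ := fun x => φ x + (b + 1)) (B := 2 * b + 1)
    (hφm.add_const _) (fun x => by linarith [(abs_le.1 (hφb x)).1])
    (fun x => by linarith [(abs_le.1 (hφb x)).2])
    (fun x' hx' x hx hxx => by simpa using hφ x' hx' x hx hxx)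
  refine ⟨K, hK, ?_⟩
  intro k n hn ψ M hψ hM
  have hm := hmain k n hn ψ M hψ hM
  have hfi : IntegrableOn (fun x => φ x * h z k x) (Ioo 0 1) := by
    have := bdd_mul_integrable (h_int hz k) hφm hφb
    simpa only [mul_comm] using this
  have hT : Measurable (fun x => ψ ((lsv z)^[n] x)) := hψ.comp (lsv_measurable.iterate n)
  have i1 : IntegrableOn (fun x => φ x * h z k x * ψ ((lsv z)^[n] x)) (Ioo 0 1) :=
    bdd_mul_integrable hfi hT (fun x => hM _)
  have i2 : IntegrableOn (fun x => h z k x * ψ ((lsv z)^[n] x)) (Ioo 0 1) :=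
    bdd_mul_integrable (h_int hz k) hT (fun x => hM _)
  have e1 : ∫ x in Ioo 0 1, (φ x + (b + 1)) * h z k x * ψ ((lsv z)^[n] x) =
      (∫ x in Ioo 0 1, φ x * h z k x * ψ ((lsv z)^[n] x)) +
        (b + 1) * ∫ x in Ioo 0 1, h z (k + n) x * ψ x := by
    rw [← h_add, iter_duality hz n (h_int hz k) hψ hM, ← integral_const_mul,
      ← integral_add i1 (i2.const_mul _)]
    congr 1
    funext x
    ring
  have e2 : ∫ x in Ioo 0 1, (φ x + (b + 1)) * h z k x =
      (∫ x in Ioo 0 1, φ x * h z k x) + (b + 1) := by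
    have : ∫ x in Ioo 0 1, (φ x + (b + 1)) * h z k x = ∫ x in Ioo 0 1,
      (φ x * h z k x + (b + 1) * h z k x) := by
      congr 1; funext x; ring
    rw [this, integral_add hfi ((h_int hz k).const_mul _), integral_const_mul, h_mass hz k, mul_one]
  rw [e1, e2] at hm
  refine le_trans (le_of_eq ?_) hm
  congr 1
  ring

end propM

section ident
variable {z : ℝ}

lemma smooth_approx {ρ : ℝ → ℝ} (hρ : IntegrableOn ρ (Ioo 0 1)) {ε : ℝ} (hε : 0 < ε) :
    ∃ (q : ℝ → ℝ) (c b : ℝ), 0 < c ∧ Measurable q ∧ (∀ x, |q x| ≤ b) ∧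
      (∀ x' ∈ Ioo (0:ℝ) 1, ∀ x ∈ Ioo (0:ℝ) 1, x' ≤ x → |q x - q x'| ≤ c * (x - x') ^ (1:ℝ)) ∧
      IntegrableOn q (Ioo 0 1) ∧ ∫ x in Ioo 0 1, |ρ x - q x| ≤ ε := by
  have hm : MemLp ρ 1 (volume.restrict (Ioo (0:ℝ) 1)) := memLp_one_iff_integrable.2 hρ
  obtain ⟨q, hq1, hq2, hq3⟩ := hm.exist_eLpNorm_sub_le (by simp) le_rfl hε
  obtain ⟨L, hL⟩ := hq2.lipschitzWith_of_hasCompactSupport hq1 (by simp)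
  obtain ⟨b, hb⟩ := hq1.exists_bound_of_continuous hq2.continuous
  have hqi : IntegrableOn q (Ioo 0 1) := by
    have := bdd_mul_integrable one_int hq2.continuous.measurable hb
    simpa using this
  refine ⟨q, L + 1, b, by positivity, hq2.continuous.measurable, hb, ?_, hqi, ?_⟩
  · intro x' hx' x hx hxx
    have := hL.dist_le_mul x x'
    rw [Real.dist_eq, Real.dist_eq, abs_of_nonneg (sub_nonneg.2 hxx)] at this
    rw [Real.rpow_one]
    nlinarith
  · have hi : Integrable (ρ - q) (volume.restrict (Ioo (0:ℝ) 1)) := hρ.sub hqi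
    rw [eLpNorm_one_eq_lintegral_enorm, ← ofReal_integral_norm_eq_lintegral_enorm hi,
      ENNReal.ofReal_le_ofReal_iff hε.le] at hq3
    exact hq3

lemma ac_restrict {μ : Measure ℝ} (hs : μ (Icc (0:ℝ) 1)ᶜ = 0) (hac : μ ≪ volume) :
    μ ≪ volume.restrict (Ioo (0:ℝ) 1) := by
  refine Measure.AbsolutelyContinuous.mk (fun s hsm h0 => ?_)
  rw [Measure.restrict_apply hsm] at h0
  have h1 := hac h0
  have h2 : μ {0} = 0 := hac (by simp)
  have h3 : μ {1} = 0 := hac (by simp)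
  have hsub : s ⊆ (s ∩ Ioo 0 1) ∪ (Icc (0:ℝ) 1)ᶜ ∪ {0} ∪ {1} := by
    intro x hx
    by_cases a : x ∈ Icc (0:ℝ) 1
    · rcases eq_or_lt_of_le a.1 with b | b
      · left; right; exact b.symm
      · rcases eq_or_lt_of_le a.2 with c | c
        · right; exact c
        · left; left; left; exact ⟨hx, b, c⟩
    · left; left; right; exact a
  refine measure_mono_null hsub ?_
  simp only [measure_union_null_iff]
  exact ⟨⟨⟨h1, hs⟩, h2⟩, h3⟩

lemma h_conv (hz : 0 < z) (hz1 : z < 1) {μ : Measure ℝ} [IsProbabilityMeasure μ]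
    (hs : μ (Icc (0:ℝ) 1)ᶜ = 0) (hac : μ ≪ volume) (hinv : MeasurePreserving (lsv z) μ μ)
    {χ : ℝ → ℝ} {M : ℝ} (hχ : Measurable χ) (hM : ∀ x, |χ x| ≤ M) :
    Filter.Tendsto (fun n => ∫ x in Ioo 0 1, h z n x * χ x) Filter.atTop (nhds (∫ x, χ x ∂μ)) := by
  have hac' := ac_restrict hs hac
  have hM0 : 0 ≤ M := (abs_nonneg _).trans (hM 0)
  have hγ : 0 < 1 / z - 1 := by
    have := one_lt_one_div hz hz1
    linarith
  set ρ : ℝ → ℝ := fun x => (μ.rnDeriv (volume.restrict (Ioo (0:ℝ) 1)) x).toReal with hρ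
  have hρi : IntegrableOn ρ (Ioo 0 1) := Measure.integrable_toReal_rnDeriv
  have hρ1 : ∫ x in Ioo 0 1, ρ x = 1 := by
    rw [hρ, Measure.integral_toReal_rnDeriv hac']; simp
  have hρf : ∀ f : ℝ → ℝ, ∫ x in Ioo 0 1, ρ x * f x = ∫ x, f x ∂μ := fun f =>
    integral_toReal_rnDeriv_mul hac'
  have hbound : ∀ n, |∫ x in Ioo 0 1, h z n x * χ x| ≤ M := by
    intro n
    calc |∫ x in Ioo 0 1, h z n x * χ x|
        ≤ ∫ x in Ioo 0 1, |h z n x * χ x| := abs_integral_le_integral_abs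
      _ ≤ ∫ x in Ioo 0 1, M * h z n x := by
          apply setIntegral_mono_on (bdd_mul_integrable (h_int hz n) hχ hM).abs
            ((h_int hz n).const_mul M) measurableSet_Ioo
          intro x hx
          rw [abs_mul, abs_of_nonneg (h_nonneg hz n x hx), mul_comm]
          exact mul_le_mul_of_nonneg_right (hM x) (h_nonneg hz n x hx)
      _ = M := by rw [integral_const_mul, h_mass hz n, mul_one]
  rw [Metric.tendsto_atTop]
  intro ε hε
  set δ := ε / (4 * (M + 1)) with hδ
  have hδ0 : 0 < δ := by positivity
  obtain ⟨q, c, b, hc, hqm, hqb, hqL, hqi, hqρ⟩ := smooth_approx hρi hδ0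
  obtain ⟨K, hK, hprop⟩ := prop_gen hz hz1 one_pos le_rfl hc hqm hqb hqL
  have hlim : Filter.Tendsto (fun n : ℕ => K * M * (n : ℝ) ^ (-(1 / z - 1))) Filter.atTop (nhds 0) := by
    have := ((tendsto_rpow_neg_atTop hγ).comp tendsto_natCast_atTop_atTop).const_mul (K * M)
    simpa using this
  have hev := (hlim.eventually (gt_mem_nhds (show 0 < ε / 2 by positivity))).and
    (Filter.eventually_ge_atTop 1)
  obtain ⟨n0, hn0⟩ := Filter.eventually_atTop.1 hev
  refine ⟨n0, fun n hn => ?_⟩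
  obtain ⟨hn1, hn2⟩ := hn0 n hn
  have hp := hprop 0 n hn2 χ M hχ hM
  have hh0 : ∀ x, h z 0 x = 1 := fun x => rfl
  simp only [hh0, mul_one, zero_add] at hp
  have hT : Measurable (fun x => χ ((lsv z)^[n] x)) := hχ.comp (lsv_measurable.iterate n)
  have hInv : ∫ x, χ x ∂μ = ∫ x in Ioo 0 1, ρ x * χ ((lsv z)^[n] x) := by
    rw [hρf]
    have hi := hinv.iterate n
    rw [← integral_map hi.measurable.aemeasurable (by
      rw [hi.map_eq]; exact hχ.aestronglyMeasurable), hi.map_eq]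
  have d1 : |(∫ x in Ioo 0 1, ρ x * χ ((lsv z)^[n] x)) - ∫ x in Ioo 0 1, q x * χ ((lsv z)^[n] x)|
      ≤ M * δ := by
    rw [← integral_sub (bdd_mul_integrable hρi hT (fun x => hM _))
      (bdd_mul_integrable hqi hT (fun x => hM _))]
    calc |∫ x in Ioo 0 1, (ρ x * χ ((lsv z)^[n] x) - q x * χ ((lsv z)^[n] x))|
        ≤ ∫ x in Ioo 0 1, |ρ x * χ ((lsv z)^[n] x) - q x * χ ((lsv z)^[n] x)| :=
          abs_integral_le_integral_abs
      _ ≤ ∫ x in Ioo 0 1, M * |ρ x - q x| := by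
          apply setIntegral_mono_on ((bdd_mul_integrable hρi hT (fun x => hM _)).sub
            (bdd_mul_integrable hqi hT (fun x => hM _))).abs
            ((hρi.sub hqi).abs.const_mul M) measurableSet_Ioo
          intro x hx
          simp only [Pi.sub_apply]
          rw [← sub_mul, abs_mul, mul_comm]
          exact mul_le_mul_of_nonneg_right (hM _) (abs_nonneg _)
      _ ≤ M * δ := by
          rw [integral_const_mul]
          exact mul_le_mul_of_nonneg_left hqρ hM0
  have d2 : |1 - ∫ x in Ioo 0 1, q x| ≤ δ := by
    have e0 : 1 - (∫ x in Ioo 0 1, q x) = ∫ x in Ioo 0 1, (ρ x - q x) := by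
      rw [integral_sub hρi hqi, hρ1]
    rw [e0]
    exact abs_integral_le_integral_abs.trans hqρ
  rw [Real.dist_eq, hInv]
  set A := ∫ x in Ioo 0 1, ρ x * χ ((lsv z)^[n] x)
  set B := ∫ x in Ioo 0 1, q x * χ ((lsv z)^[n] x)
  set Hn := ∫ x in Ioo 0 1, h z n x * χ x with hHn
  set Iq := ∫ x in Ioo 0 1, q x
  have d3 : |(1 - Iq) * Hn| ≤ δ * M := by
    rw [abs_mul]
    exact mul_le_mul d2 (hbound n) (abs_nonneg _) hδ0.le
  have d4 : 2 * (M * δ) < ε / 2 := by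
    have : δ * (4 * (M + 1)) = ε := by rw [hδ]; field_simp
    nlinarith
  have e : Hn - A = (1 - Iq) * Hn - (A - B) - (B - Iq * Hn) := by ring
  rw [e]
  rw [abs_le] at d1 d3 hp
  rw [abs_lt]
  constructor <;> nlinarith [d1.1, d1.2, d3.1, d3.2, hp.1, hp.2]

/-- Decay for a globally bounded measurable observable which is Hölder inside the interval. -/
lemma decay (hz : 0 < z) (hz1 : z < 1) {μ : Measure ℝ} [IsProbabilityMeasure μ]
    (hs : μ (Icc (0:ℝ) 1)ᶜ = 0) (hac : μ ≪ volume) (hinv : MeasurePreserving (lsv z) μ μ)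
    {r c b : ℝ} (hr : 0 < r) (hr1 : r ≤ 1) (hc : 0 < c)
    {φ : ℝ → ℝ} (hφm : Measurable φ) (hφb : ∀ x, |φ x| ≤ b)
    (hφ : ∀ x' ∈ Ioo (0:ℝ) 1, ∀ x ∈ Ioo (0:ℝ) 1, x' ≤ x → |φ x - φ x'| ≤ c * (x - x') ^ r)
    {ψ : ℝ → ℝ} {M : ℝ} (hψ : Measurable ψ) (hM : ∀ x, |ψ x| ≤ M) :
    ∃ C : ℝ, 0 < C ∧ ∀ n : ℕ, 1 ≤ n →
      |∫ x, φ x * ψ ((lsv z)^[n] x) ∂μ - (∫ x, φ x ∂μ) * ∫ x, ψ x ∂μ|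
        ≤ C * (n : ℝ) ^ (-(1 / z - 1)) := by
  obtain ⟨K, hK, hprop⟩ := prop_gen hz hz1 hr hr1 hc hφm hφb hφ
  have hM0 : 0 ≤ M := (abs_nonneg _).trans (hM 0)
  have hb0 : 0 ≤ b := (abs_nonneg _).trans (hφb 0)
  refine ⟨K * M + 1, by positivity, fun n hn => ?_⟩
  have hT : Measurable (fun x => ψ ((lsv z)^[n] x)) := hψ.comp (lsv_measurable.iterate n)
  have c1 := h_conv hz hz1 hs hac hinv (hφm.mul hT) (M := b * M) (fun x => by
    simp only [Pi.mul_apply]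
    rw [abs_mul]
    exact mul_le_mul (hφb x) (hM _) (abs_nonneg _) hb0)
  have c2 := h_conv hz hz1 hs hac hinv hφm hφb
  have c3 := (h_conv hz hz1 hs hac hinv hψ hM).comp (Filter.tendsto_add_atTop_nat n)
  have c4 := (c1.sub (c2.mul c3)).abs
  have hle := le_of_tendsto' c4 (b := K * M * (n : ℝ) ^ (-(1 / z - 1))) (fun k => by
    have := hprop k n hn ψ M hψ hM
    refine le_trans (le_of_eq ?_) this
    congr 1
    simp only [Function.comp, Pi.mul_apply]
    congr 1
    · congr 1
      funext x
      ring
    · congr 2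
      funext x
      ring)
  refine hle.trans ?_
  have : 0 ≤ (n : ℝ) ^ (-(1 / z - 1)) := by positivity
  nlinarith

lemma final (hz : 0 < z) (hz1 : z < 1) {μ : Measure ℝ} [IsProbabilityMeasure μ]
    (hs : μ (Icc (0:ℝ) 1)ᶜ = 0) (hac : μ ≪ volume) (hinv : MeasurePreserving (lsv z) μ μ)
    {φ : ℝ → ℝ} {C r : ℝ≥0} (hr : 0 < r) (hr1 : r ≤ 1) (hφ : HolderOnWith C r φ (Icc (0:ℝ) 1))
    {ψ : ℝ → ℝ} {M : ℝ} (hψ : Measurable ψ) (hM : ∀ x, |ψ x| ≤ M) :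
    ∃ C : ℝ, 0 < C ∧ ∀ n : ℕ, 1 ≤ n →
      |∫ x, φ x * ψ ((lsv z)^[n] x) ∂μ - (∫ x, φ x ∂μ) * ∫ x, ψ x ∂μ|
        ≤ C * (n : ℝ) ^ (-(1 / z - 1)) := by
  set φt : ℝ → ℝ := fun x => φ (projIcc 0 1 zero_le_one x) with hφt
  have heq : ∀ x ∈ Icc (0:ℝ) 1, φt x = φ x := fun x hx => by
    simp only [hφt, projIcc_of_mem zero_le_one hx]
  have hcont : Continuous φt :=
    (hφ.continuousOn hr).comp_continuous (continuous_subtype_val.comp continuous_projIcc)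
      (fun x => (projIcc 0 1 zero_le_one x).2)
  have hr0 : (0:ℝ) < r := by exact_mod_cast hr
  have hr1' : (r:ℝ) ≤ 1 := by exact_mod_cast hr1
  obtain ⟨b, hb⟩ := (isCompact_Icc (a := (0:ℝ)) (b := 1)).exists_bound_of_continuousOn
    (hφ.continuousOn hr)
  have hφb : ∀ x, |φt x| ≤ b := fun x => hb _ (projIcc 0 1 zero_le_one x).2
  have hH : ∀ x' ∈ Ioo (0:ℝ) 1, ∀ x ∈ Ioo (0:ℝ) 1, x' ≤ x →
      |φt x - φt x'| ≤ (C + 1 : ℝ) * (x - x') ^ (r : ℝ) := by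
    intro x' hx' x hx hxx
    rw [heq x (Ioo_subset_Icc_self hx), heq x' (Ioo_subset_Icc_self hx')]
    have := hφ.dist_le (Ioo_subset_Icc_self hx) (Ioo_subset_Icc_self hx')
    rw [Real.dist_eq, Real.dist_eq, abs_of_nonneg (sub_nonneg.2 hxx)] at this
    have h0 : 0 ≤ (x - x') ^ (r:ℝ) := Real.rpow_nonneg (sub_nonneg.2 hxx) _
    linarith
  obtain ⟨D, hD, hmain⟩ := decay hz hz1 hs hac hinv hr0 hr1' (by positivity) hcont.measurable hφb hH
    hψ hM
  refine ⟨D, hD, fun n hn => ?_⟩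
  have hae : ∀ᵐ x ∂μ, φt x = φ x := by
    have : ∀ᵐ x ∂μ, x ∈ Icc (0:ℝ) 1 := hs
    filter_upwards [this] with x hx using heq x hx
  have := hmain n hn
  rw [integral_congr_ae hae, integral_congr_ae (g := fun x => φ x * ψ ((lsv z)^[n] x))
    (by filter_upwards [hae] with x hx; rw [hx])] at this
  exact this

end ident

end LSV

/-- For `z ∈ (0,1)` and `μ` the unique absolutely continuous `f_z`-invariant
Borel probability measure on `[0,1]`, correlations of a Hölder observable `φ` against a bounded
measurable `ψ` decay at rate `n^{−(1/z − 1)}`. -/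
theorem lsv_polynomial_decay_of_correlations
    (z : ℝ) (hz : z ∈ Set.Ioo (0 : ℝ) 1)
    (μ : Measure ℝ) (hμprob : IsProbabilityMeasure μ) (hμsupp : μ (Set.Icc (0 : ℝ) 1)ᶜ = 0)
    (hμac : μ ≪ volume) (hμinv : MeasurePreserving (lsv z) μ μ)
    (φ : ℝ → ℝ) (hφ : ∃ C r : ℝ≥0, 0 < r ∧ r ≤ 1 ∧ HolderOnWith C r φ (Set.Icc (0 : ℝ) 1))
    (ψ : ℝ → ℝ) (hψmeas : Measurable ψ) (hψbdd : ∃ M : ℝ, ∀ x, |ψ x| ≤ M) :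
    ∃ C : ℝ, 0 < C ∧ ∀ n : ℕ, 1 ≤ n →
      |∫ x, φ x * ψ ((lsv z)^[n] x) ∂μ - (∫ x, φ x ∂μ) * ∫ x, ψ x ∂μ|
        ≤ C * (n : ℝ) ^ (-(1 / z - 1)) := by
  obtain ⟨C, r, hr, hr1, hH⟩ := hφ
  obtain ⟨M, hM⟩ := hψbdd
  exact LSV.final hz.1 hz.2 hμsupp hμac hμinv hr hr1 hH hψmeas hM
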